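/- arXiv:1908.05681 — 10 statements merged into one kernel-verified Lean document; each statement's English description precedes it below -/
import Mathlib

section
/- Let R be a finite nonempty poset. Then R ⊑ R^d holds if and only if R is isomorphic to its dual R^d. -/
/-!
The hypothesis `R ⊑ Rᵒᵈ` is self-improving: a monotone map `P → Rᵒᵈ` is a monotone map `Pᵒᵈ → R`,
so applying the inequality to `P` and to `Pᵒᵈ` gives `#H(P, R) = #H(P, Rᵒᵈ)` for all `P`.
The counting argument of Lovász then applies. Sorting homomorphisms by their kernel writes `#H(P, R)` as the sum,
over the equivalence relations `θ` on `P`, of the number of injective homomorphisms `P/θ → R`;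
by induction on `#P`, the numbers of injective homomorphisms into `R` and `Rᵒᵈ` agree
(`card_injHom_eq`). Since `id : R → R` is injective, there is an injective monotone map `R → Rᵒᵈ`,
and by finiteness it is an isomorphism.

To keep quotients simple, the induction runs over arbitrary relations instead of partial orders:
`P/θ` then just carries the image relation. A relation has the same homomorphisms into a poset as
the poset reflection of its reflexive transitive closure (`posetHomEquiv`), so nothing is lost.
-/

/-- One zigzag step inside the subset `A`. -/
def ZigStep {P : Type} [PartialOrder P] (A : Set P) (a b : P) : Prop :=
  a ∈ A ∧ b ∈ A ∧ (a < b ∨ b < a)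

/-- `gamma A x` is the set of points of `A` connected with `x` by a zigzag line inside `A`. -/
def gamma {P : Type} [PartialOrder P] (A : Set P) (x : P) : Set P :=
  {y | x ∈ A ∧ y ∈ A ∧ Relation.ReflTransGen (ZigStep A) x y}

/-- `Gmap ξ x = γ_{ξ⁻¹(ξ(x))}(x)`. -/
def Gmap {P R : Type} [PartialOrder P] (ξ : P → R) (x : P) : Set P :=
  gamma (ξ ⁻¹' {ξ x}) x

/-- `R ⊑ S` : `#H(P,R) ≤ #H(P,S)` for every finite nonempty poset `P`. -/
def Sqsub (R S : Type) [PartialOrder R] [PartialOrder S] : Prop :=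
  ∀ (P : Type) [PartialOrder P] [Finite P] [Nonempty P],
    Nat.card (P →o R) ≤ Nat.card (P →o S)

/-- `R ⊑_G S` : there is a strong G-scheme from `R` to `S`. -/
def SqsubG (R S : Type) [PartialOrder R] [PartialOrder S] : Prop :=
  ∃ ρ : ∀ (P : Type) [PartialOrder P] [Finite P] [Nonempty P], (P →o R) → (P →o S),
    ∀ (P : Type) [PartialOrder P] [Finite P] [Nonempty P],
      Function.Injective (ρ P) ∧
      ∀ (ξ : P →o R) (x : P), Gmap (⇑(ρ P ξ)) x = Gmap (⇑ξ) x

/-- Maps `f` from `P`, with an arbitrary relation `r`, to the poset `R` such that `r a b` implies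
`f a ≤ f b`. -/
abbrev PosetHom {P : Type} (r : P → P → Prop) (R : Type) [PartialOrder R] : Type :=
  {f : P → R // ∀ a b, r a b → f a ≤ f b}

/-- Injective members of `PosetHom r R`. -/
abbrev InjHom {P : Type} (r : P → P → Prop) (R : Type) [PartialOrder R] : Type :=
  {f : P → R // (∀ a b, r a b → f a ≤ f b) ∧ Function.Injective f}

/-- The preorder generated by a relation. -/
abbrev genPreorder {P : Type} (r : P → P → Prop) : Preorder P where
  le := Relation.ReflTransGen r
  le_refl _ := Relation.ReflTransGen.refl
  le_trans _ _ _ := Relation.ReflTransGen.trans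

/-- The poset reflection of the preorder generated by a relation. -/
abbrev Reflection {P : Type} (r : P → P → Prop) : Type :=
  @Antisymmetrization P (genPreorder r).le
    (@instIsPreorderLe P (genPreorder r))

instance reflectionOrder {P : Type} (r : P → P → Prop) : PartialOrder (Reflection r) :=
  @instPartialOrderAntisymmetrization P (genPreorder r)

theorem PosetHom.le_of_reflTransGen {P R : Type} [PartialOrder R] {r : P → P → Prop}
    (f : PosetHom r R) {a b : P} (h : Relation.ReflTransGen r a b) : f.1 a ≤ f.1 b := by
  induction h with
  | refl => exact le_rfl
  | tail _ h ih => exact ih.trans (f.2 _ _ h)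

/-- The universal property of the poset reflection of a relation. -/
def posetHomEquiv {P : Type} (r : P → P → Prop) (R : Type) [PartialOrder R] :
    PosetHom r R ≃ (Reflection r →o R) where
  toFun f :=
    { toFun := Quotient.lift f.1 fun _ _ h =>
        le_antisymm (f.le_of_reflTransGen h.1) (f.le_of_reflTransGen h.2)
      monotone' := by
        rintro ⟨a⟩ ⟨b⟩ h
        exact f.le_of_reflTransGen h }
  invFun g := ⟨fun a => g (Quotient.mk _ a), fun a b h =>
    g.monotone (show Relation.ReflTransGen r a b from Relation.ReflTransGen.single h)⟩
  left_inv _ := rfl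
  right_inv g := by
    ext ⟨a⟩
    rfl

/-- Homomorphisms with kernel `θ` are the injective homomorphisms out of the quotient by `θ`. -/
def kerFiberEquiv {P : Type} (r : P → P → Prop) (R : Type) [PartialOrder R] (θ : Setoid P) :
    {f : PosetHom r R // Setoid.ker f.1 = θ} ≃
      InjHom (Relation.Map r (Quotient.mk θ) (Quotient.mk θ)) R where
  toFun f := ⟨Quotient.lift f.1.1 fun a b h => by
      have h' : Setoid.ker f.1.1 a b := by rw [f.2]; exact h
      exact h', by
    constructor
    · rintro _ _ ⟨a, b, h, rfl, rfl⟩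
      exact f.1.2 a b h
    · rintro ⟨a⟩ ⟨b⟩ h
      apply Quotient.sound
      have h' : Setoid.ker f.1.1 a b := h
      rw [f.2] at h'
      exact h'⟩
  invFun g := ⟨⟨fun a => g.1 (Quotient.mk θ a), fun a b h => g.2.1 _ _ ⟨a, b, h, rfl, rfl⟩⟩, by
    ext a b
    exact ⟨fun h => Quotient.exact (g.2.2 h), fun h => congrArg g.1 (Quotient.sound h)⟩⟩
  left_inv _ := rfl
  right_inv g := by
    apply Subtype.ext
    funext q
    obtain ⟨a⟩ := q
    rfl

/-- The fibre over the trivial kernel consists of the injective homomorphisms. -/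
def kerBotEquiv {P : Type} (r : P → P → Prop) (R : Type) [PartialOrder R] :
    {f : PosetHom r R // Setoid.ker f.1 = ⊥} ≃ InjHom r R where
  toFun f := ⟨f.1.1, f.1.2, (Setoid.injective_iff_ker_bot _).2 f.2⟩
  invFun g := ⟨⟨g.1, g.2.1⟩, (Setoid.injective_iff_ker_bot _).1 g.2.2⟩
  left_inv _ := rfl
  right_inv _ := rfl

theorem card_quotient_lt {P : Type} [Finite P] {θ : Setoid P} (h : θ ≠ ⊥) :
    Nat.card (Quotient θ) < Nat.card P := by
  refine lt_of_le_of_ne (Nat.card_le_card_of_surjective _ Quotient.mk_surjective) fun e => h ?_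
  have hb := (Nat.bijective_iff_surjective_and_card (Quotient.mk θ)).2
    ⟨Quotient.mk_surjective, e.symm⟩
  ext a b
  exact ⟨fun hab => hb.1 (Quotient.sound hab), fun hab => by
    have hab' : a = b := hab
    subst hab'
    exact θ.refl a⟩

/-- Sorting by kernels, with the trivial kernel split off. -/
theorem card_posetHom {P R : Type} [Finite P] [PartialOrder R] [Finite R] [Fintype (Setoid P)]
    [DecidableEq (Setoid P)] (r : P → P → Prop) :
    Nat.card (PosetHom r R) = Nat.card (InjHom r R) + ∑ θ ∈ Finset.univ.erase (⊥ : Setoid P),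
      Nat.card (InjHom (Relation.Map r (Quotient.mk θ) (Quotient.mk θ)) R) := by
  rw [← Nat.card_congr (Equiv.sigmaFiberEquiv fun f : PosetHom r R => Setoid.ker f.1),
    Nat.card_sigma, ← Finset.add_sum_erase _ _ (Finset.mem_univ (⊥ : Setoid P)),
    Nat.card_congr (kerBotEquiv r R)]
  congr 1
  exact Finset.sum_congr rfl fun θ _ => Nat.card_congr (kerFiberEquiv r R θ)

theorem card_injHom_eq {R S : Type} [PartialOrder R] [Finite R] [PartialOrder S] [Finite S]
    (H : ∀ (P : Type) [Finite P] (r : P → P → Prop),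
      Nat.card (PosetHom r R) = Nat.card (PosetHom r S))
    (n : ℕ) : ∀ (P : Type) [Finite P] (r : P → P → Prop), Nat.card P = n →
      Nat.card (InjHom r R) = Nat.card (InjHom r S) := by
  classical
  induction n using Nat.strong_induction_on with
  | _ n ih =>
    intro P _ r hP
    have : Finite (Setoid P) :=
      Finite.of_injective (fun θ : Setoid P => (θ : P → P → Prop)) fun a b h =>
        Setoid.ext fun x y => iff_of_eq (congrFun (congrFun h x) y)
    have := Fintype.ofFinite (Setoid P)
    have h := H P r
    rw [card_posetHom, card_posetHom, Finset.sum_congr rfl fun θ hθ =>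
      ih _ (hP ▸ card_quotient_lt (Finset.ne_of_mem_erase hθ)) (Quotient θ) _ rfl] at h
    exact Nat.add_right_cancel h

/-- An order-reversing permutation of a finite poset has an order-reversing inverse, because it
permutes the finite set of comparable pairs. -/
theorem le_of_antitone_injective {R : Type} [PartialOrder R] [Finite R] {f : R → R}
    (hf : Antitone f) (hinj : Function.Injective f) {a b : R} (h : f b ≤ f a) : a ≤ b := by
  let F : {p : R × R // p.1 ≤ p.2} → {p : R × R // p.1 ≤ p.2} :=
    fun p => ⟨(f p.1.2, f p.1.1), hf p.2⟩
  have hF : Function.Injective F := by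
    rintro ⟨⟨x, y⟩, _⟩ ⟨⟨x', y'⟩, _⟩ e
    simp only [F, Subtype.mk.injEq, Prod.mk.injEq] at e ⊢
    exact ⟨hinj e.2, hinj e.1⟩
  obtain ⟨⟨⟨x, y⟩, hxy⟩, e⟩ := Finite.surjective_of_injective hF ⟨(f b, f a), h⟩
  simp only [F, Subtype.mk.injEq, Prod.mk.injEq] at e
  rw [← hinj e.1, ← hinj e.2]
  exact hxy

/-- Dualizing the source amounts to dualizing the target. -/
def homDualEquiv (P R : Type) [PartialOrder P] [PartialOrder R] : (P →o Rᵒᵈ) ≃ (Pᵒᵈ →o R) where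
  toFun f := ⟨fun a => OrderDual.ofDual (f (OrderDual.ofDual a)), fun _ _ h => f.monotone h⟩
  invFun g := ⟨fun a => OrderDual.toDual (g (OrderDual.toDual a)), fun _ _ h => g.monotone h⟩
  left_inv _ := rfl
  right_inv _ := rfl

theorem card_hom_eq {R : Type} [PartialOrder R] (h : Sqsub R Rᵒᵈ)
    (P : Type) [PartialOrder P] [Finite P] [Nonempty P] :
    Nat.card (P →o R) = Nat.card (P →o Rᵒᵈ) := by
  refine le_antisymm (h P) ?_
  have h' := h Pᵒᵈ
  rw [← Nat.card_congr (homDualEquiv P R), Nat.card_congr (homDualEquiv Pᵒᵈ R)] at h'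
  exact h'

/-- `R ⊑ R^d` holds if and only if `R` is isomorphic to its dual. -/
theorem stmt2 (R : Type) [PartialOrder R] [Finite R] [Nonempty R] :
    Sqsub R Rᵒᵈ ↔ Nonempty (R ≃o Rᵒᵈ) := by
  constructor
  · intro h
    have : Finite Rᵒᵈ := ‹Finite R›
    have H : ∀ (P : Type) [Finite P] (r : P → P → Prop),
        Nat.card (PosetHom r R) = Nat.card (PosetHom r Rᵒᵈ) := by
      intro P _ r
      rw [Nat.card_congr (posetHomEquiv r R), Nat.card_congr (posetHomEquiv r Rᵒᵈ)]
      have : Finite (Reflection r) := Quotient.finite _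
      rcases isEmpty_or_nonempty (Reflection r) with he | hn
      -- `Sqsub` says nothing about the empty poset, but it has exactly one map to any target.
      · exact Nat.card_congr
          { toFun := fun _ => ⟨isEmptyElim, fun a => isEmptyElim a⟩
            invFun := fun _ => ⟨isEmptyElim, fun a => isEmptyElim a⟩
            left_inv := fun f => by ext a; exact isEmptyElim a
            right_inv := fun f => by ext a; exact isEmptyElim a }
      · exact card_hom_eq h _
    have hc := card_injHom_eq H _ R (· ≤ ·) rfl
    have : Nonempty (InjHom (fun a b : R => a ≤ b) R) := ⟨⟨id, fun _ _ h => h, fun _ _ h => h⟩⟩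
    have hpos : 0 < Nat.card (InjHom (fun a b : R => a ≤ b) Rᵒᵈ) := hc ▸ Nat.card_pos
    obtain ⟨⟨⟨f, hf, hinj⟩⟩, _⟩ := Nat.card_pos_iff.1 hpos
    let g : R → R := fun a => OrderDual.ofDual (f a)
    have hg : Antitone g := fun a b hab => hf a b hab
    have hginj : Function.Injective g := hinj
    have hbij : Function.Bijective f := ⟨hinj, Finite.surjective_of_injective hginj⟩
    exact ⟨{ toEquiv := Equiv.ofBijective f hbij
             map_rel_iff' := fun {a b} => ⟨fun hab => le_of_antitone_injective hg hginj hab,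
              fun hab => hf a b hab⟩ }⟩
  · rintro ⟨e⟩ P _ _ _
    exact (Nat.card_congr (OrderIso.arrowCongr (OrderIso.refl P) e).toEquiv).le
end

section
/- Let R¹, R², S¹, S² be finite nonempty posets such that R¹ and R² have disjoint carriers and S¹ and S² have disjoint carriers. If R¹ ⊑ S¹ and R² ⊑ S², then R¹ + R² ⊑ S¹ + S². -/
/-- The inequality defining `⊑` also holds for the empty poset. -/
lemma Sqsub.card_le {R S : Type} [PartialOrder R] [PartialOrder S] (h : Sqsub R S)
    (P : Type) [PartialOrder P] [Finite P] : Nat.card (P →o R) ≤ Nat.card (P →o S) := by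
  rcases isEmpty_or_nonempty P with hP | hP
  · have e : (P →o R) ≃ (P →o S) :=
      { toFun := fun _ => ⟨fun p => hP.elim p, fun p => hP.elim p⟩
        invFun := fun _ => ⟨fun p => hP.elim p, fun p => hP.elim p⟩
        left_inv := fun f => by ext p; exact hP.elim p
        right_inv := fun f => by ext p; exact hP.elim p }
    exact (Nat.card_congr e).le
  · exact h P

/-- The monotone maps `P → R ⊕ S` whose splitting of `P` is given by `c`: the points with
`c p = true` are exactly those mapped into `R`. -/
def HomSumFiber (R S : Type) [PartialOrder R] [PartialOrder S] {P : Type} [PartialOrder P]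
    (c : P → Bool) : Type :=
  {f : P →o R ⊕ S // (fun p => (f p).isLeft) = c}

/-- The two parts of the splitting induced by a monotone map into `R ⊕ S` are disconnected. -/
lemma HomSumFiber.eq_of_le {R S P : Type} [PartialOrder R] [PartialOrder S] [PartialOrder P]
    {c : P → Bool} (f : HomSumFiber R S c) {p q : P} (hpq : p ≤ q) : c p = c q := by
  obtain ⟨f, rfl⟩ := f
  have h := f.monotone hpq
  show (f p).isLeft = (f q).isLeft
  rcases hp : f p with a | a <;> rcases hq : f q with b | b <;> simp_all

/-- The map into `R ⊕ S` glued from maps on the two parts of the splitting `c`. -/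
def glueSum {R S P : Type} (c : P → Bool) (u : {p // c p = true} → R)
    (v : {p // c p = false} → S) (p : P) : R ⊕ S :=
  if h : c p = true then Sum.inl (u ⟨p, h⟩)
  else Sum.inr (v ⟨p, Bool.eq_false_of_not_eq_true h⟩)

lemma glueSum_of_true {R S P : Type} {c : P → Bool} (u : {p // c p = true} → R)
    (v : {p // c p = false} → S) {p : P} (h : c p = true) :
    glueSum c u v p = Sum.inl (u ⟨p, h⟩) := dif_pos h

lemma glueSum_of_false {R S P : Type} {c : P → Bool} (u : {p // c p = true} → R)
    (v : {p // c p = false} → S) {p : P} (h : c p = false) :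
    glueSum c u v p = Sum.inr (v ⟨p, h⟩) := dif_neg (by simp [h])

/-- For a splitting `c` into disconnected parts, a monotone map into `R ⊕ S` inducing `c` is a pair
of monotone maps on the parts. -/
def homSumFiberEquiv (R S : Type) {P : Type} [PartialOrder R] [PartialOrder S] [PartialOrder P]
    (c : P → Bool) (hc : ∀ p q, p ≤ q → c p = c q) :
    HomSumFiber R S c ≃ ({p // c p = true} →o R) × ({p // c p = false} →o S) where
  toFun f :=
    (⟨fun p => (f.1 p.1).getLeft ((congrFun f.2 p.1).trans p.2), fun p q hpq => by
        rw [← Sum.inl_le_inl_iff (β := S), Sum.inl_getLeft, Sum.inl_getLeft]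
        exact f.1.monotone hpq⟩,
     ⟨fun p => (f.1 p.1).getRight (by
          have := (congrFun f.2 p.1).trans p.2
          simpa using this), fun p q hpq => by
        rw [← Sum.inr_le_inr_iff (α := R), Sum.inr_getRight, Sum.inr_getRight]
        exact f.1.monotone hpq⟩)
  invFun g :=
    ⟨⟨glueSum c g.1 g.2, fun p q hpq => by
        have e := hc p q hpq
        by_cases h : c p = true
        · have h' : c q = true := e ▸ h
          rw [glueSum_of_true g.1 g.2 h, glueSum_of_true g.1 g.2 h', Sum.inl_le_inl_iff]
          exact g.1.monotone (a := ⟨p, h⟩) (b := ⟨q, h'⟩) hpq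
        · have h := Bool.eq_false_of_not_eq_true h
          have h' : c q = false := e ▸ h
          rw [glueSum_of_false g.1 g.2 h, glueSum_of_false g.1 g.2 h', Sum.inr_le_inr_iff]
          exact g.2.monotone (a := ⟨p, h⟩) (b := ⟨q, h'⟩) hpq⟩, by
      funext p
      change (glueSum c g.1 g.2 p).isLeft = c p
      cases h : c p
      · rw [glueSum_of_false g.1 g.2 h, Sum.isLeft_inr]
      · rw [glueSum_of_true g.1 g.2 h, Sum.isLeft_inl]⟩
  left_inv f := by
    apply Subtype.ext
    apply OrderHom.ext
    funext p
    change glueSum c _ _ p = f.1 p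
    cases h : c p
    · rw [glueSum_of_false _ _ h]
      exact Sum.inr_getRight _ _
    · rw [glueSum_of_true _ _ h]
      exact Sum.inl_getLeft _ _
  right_inv g := by
    apply Prod.ext
    · apply OrderHom.ext
      funext p
      apply Sum.inl_injective (β := S)
      exact (Sum.inl_getLeft _ _).trans (glueSum_of_true g.1 g.2 p.2)
    · apply OrderHom.ext
      funext p
      apply Sum.inr_injective (α := R)
      exact (Sum.inr_getRight _ _).trans (glueSum_of_false g.1 g.2 p.2)

lemma card_homSum (R S P : Type) [PartialOrder R] [PartialOrder S] [PartialOrder P]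
    [Finite R] [Finite S] [Finite P] [Fintype (P → Bool)] :
    Nat.card (P →o R ⊕ S) = ∑ c : P → Bool, Nat.card (HomSumFiber R S c) := by
  have : Finite (P →o R ⊕ S) := DFunLike.finite _
  have (c : P → Bool) : Finite (HomSumFiber R S c) := Subtype.finite
  rw [← Nat.card_sigma]
  exact Nat.card_congr
    (Equiv.sigmaFiberEquiv fun (f : P →o R ⊕ S) (p : P) => (f p).isLeft).symm

/-- Compatibility of `⊑` with direct sums: the direct sum `A + B` of two posets with
disjoint carriers is modelled by the sum type `A ⊕ B` with the disjoint-union order. -/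
theorem stmt3 (R₁ R₂ S₁ S₂ : Type)
    [PartialOrder R₁] [Finite R₁] [Nonempty R₁] [PartialOrder R₂] [Finite R₂] [Nonempty R₂]
    [PartialOrder S₁] [Finite S₁] [Nonempty S₁] [PartialOrder S₂] [Finite S₂] [Nonempty S₂]
    (h₁ : Sqsub R₁ S₁) (h₂ : Sqsub R₂ S₂) :
    Sqsub (R₁ ⊕ R₂) (S₁ ⊕ S₂) := by
  intro P _ _ _
  have := Fintype.ofFinite (P → Bool)
  rw [card_homSum, card_homSum]
  refine Finset.sum_le_sum fun c _ => ?_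
  rcases isEmpty_or_nonempty (HomSumFiber R₁ R₂ c) with hE | ⟨⟨f⟩⟩
  · simp
  · have hc : ∀ p q, p ≤ q → c p = c q := fun p q hpq => f.eq_of_le hpq
    rw [Nat.card_congr (homSumFiberEquiv R₁ R₂ c hc), Nat.card_congr (homSumFiberEquiv S₁ S₂ c hc),
      Nat.card_prod, Nat.card_prod]
    exact Nat.mul_le_mul (h₁.card_le _) (h₂.card_le _)
end

section
/- Let R¹, R², S¹, S² be finite nonempty posets such that R¹ and R² have disjoint carriers and S¹ and S² have disjoint carriers. If R¹ ⊑_G S¹ and R² ⊑_G S², then R¹ + R² ⊑_G S¹ + S². -/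
/-- An order embedding carries the components of a subset to the components of its image. -/
lemma gamma_image {P Q : Type} [PartialOrder P] [PartialOrder Q] (i : Q ↪o P) (B : Set Q) (q : Q) :
    gamma (i '' B) (i q) = i '' gamma B q := by
  ext y
  constructor
  · rintro ⟨hq, -, h⟩
    have hq' : q ∈ B := by simpa using hq
    induction h with
    | refl => exact ⟨q, ⟨hq', hq', .refl⟩, rfl⟩
    | tail _ hstep ih =>
      obtain ⟨b, ⟨_, hb, hqb⟩, rfl⟩ := ih
      obtain ⟨_, ⟨c, hc, rfl⟩, hbc⟩ := hstep
      exact ⟨c, ⟨hq', hc, hqb.tail ⟨hb, hc, by simpa using hbc⟩⟩, rfl⟩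
  · rintro ⟨c, ⟨hq, hc, h⟩, rfl⟩
    exact ⟨⟨q, hq, rfl⟩, ⟨c, hc, rfl⟩, h.lift i fun a b hab =>
      ⟨⟨a, hab.1, rfl⟩, ⟨b, hab.2.1, rfl⟩, by simpa using hab.2.2⟩⟩

/-- If a fibre of `ξ` is the image of a fibre of `f` under an order embedding, then so is the
corresponding component. -/
lemma Gmap_of_fibre {P Q R R' : Type} [PartialOrder P] [PartialOrder Q] (i : Q ↪o P)
    (ξ : P → R) (f : Q → R') (q : Q) (h : ξ ⁻¹' {ξ (i q)} = i '' (f ⁻¹' {f q})) :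
    Gmap ξ (i q) = i '' Gmap f q := by
  unfold Gmap
  rw [h, gamma_image]

/-- A strong G-scheme extends to empty posets, on which there is exactly one homomorphism. -/
lemma SqsubG.exists_scheme {R S : Type} [PartialOrder R] [PartialOrder S] (h : SqsubG R S)
    (P : Type) [PartialOrder P] [Finite P] :
    ∃ ρ : (P →o R) → (P →o S), Function.Injective ρ ∧
      ∀ (ξ : P →o R) (x : P), Gmap (⇑(ρ ξ)) x = Gmap (⇑ξ) x := by
  obtain ⟨ρ, hρ⟩ := h
  rcases isEmpty_or_nonempty P with hP | hP
  · refine ⟨fun _ => ⟨fun x => isEmptyElim x, fun x => isEmptyElim x⟩, fun f g _ => ?_,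
      fun _ x => isEmptyElim x⟩
    ext x
    exact isEmptyElim x
  · exact ⟨ρ P, hρ P⟩

/-- A decomposition of `P` into two mutually unrelated parts (`part` and its complement), together
with a homomorphism from the first part to `R₁` and one from the second part to `R₂`. -/
structure SumSplit (P R₁ R₂ : Type) [PartialOrder P] [PartialOrder R₁] [PartialOrder R₂] where
  part : Set P
  mem_iff : ∀ x y : P, x ≤ y → (x ∈ part ↔ y ∈ part)
  left : part →o R₁
  right : ↥(partᶜ) →o R₂

namespace SumSplit

variable {P R₁ R₂ S₁ S₂ : Type} [PartialOrder P] [PartialOrder R₁] [PartialOrder R₂]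
  [PartialOrder S₁] [PartialOrder S₂]

open Classical in
/-- The homomorphism into the direct sum that restricts to the two given homomorphisms. -/
noncomputable def glue (s : SumSplit P R₁ R₂) : P →o R₁ ⊕ R₂ where
  toFun x := if h : x ∈ s.part then .inl (s.left ⟨x, h⟩) else .inr (s.right ⟨x, h⟩)
  monotone' x y hxy := by
    by_cases hx : x ∈ s.part
    · have hy := (s.mem_iff x y hxy).1 hx
      simpa [hx, hy] using s.left.monotone (show (⟨x, hx⟩ : s.part) ≤ ⟨y, hy⟩ from hxy)
    · have hy : y ∉ s.part := fun hy => hx ((s.mem_iff x y hxy).2 hy)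
      simpa [hx, hy] using
        s.right.monotone (show (⟨x, hx⟩ : ↥(s.partᶜ)) ≤ ⟨y, hy⟩ from hxy)

lemma glue_left (s : SumSplit P R₁ R₂) (x : s.part) : s.glue x = .inl (s.left x) := by
  exact dif_pos x.2

lemma glue_right (s : SumSplit P R₁ R₂) (x : ↥(s.partᶜ)) : s.glue x = .inr (s.right x) := by
  exact dif_neg x.2

lemma mem_part_iff (s : SumSplit P R₁ R₂) (x : P) : x ∈ s.part ↔ (s.glue x).isLeft := by
  by_cases hx : x ∈ s.part
  · simp [hx, s.glue_left ⟨x, hx⟩]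
  · simp [hx, s.glue_right ⟨x, hx⟩]

lemma glue_injective : Function.Injective (glue : SumSplit P R₁ R₂ → (P →o R₁ ⊕ R₂)) := by
  intro s t h
  have hpart : s.part = t.part := by
    ext x
    rw [mem_part_iff, mem_part_iff, h]
  have hl := s.glue_left
  have hr := s.glue_right
  rw [h] at hl hr
  obtain ⟨A, hA, f, g⟩ := s
  obtain ⟨B, hB, f', g'⟩ := t
  obtain rfl : A = B := hpart
  have hf : f = f' := by
    ext x
    exact Sum.inl_injective ((hl x).symm.trans (glue_left ⟨A, hB, f', g'⟩ x))
  have hg : g = g' := by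
    ext x
    exact Sum.inr_injective ((hr x).symm.trans (glue_right ⟨A, hB, f', g'⟩ x))
  rw [hf, hg]

lemma glue_surjective : Function.Surjective (glue : SumSplit P R₁ R₂ → (P →o R₁ ⊕ R₂)) := by
  intro ξ
  let A : Set P := {x | (ξ x).isLeft}
  have hA : ∀ x : A, (ξ x).isLeft := fun x => x.2
  have hAc : ∀ x : ↥(Aᶜ), (ξ x).isRight := fun x => Sum.not_isLeft.1 x.2
  refine ⟨⟨A, fun x y hxy => ?_,
    ⟨fun x => (ξ x).getLeft (hA x), fun x y hxy => ?_⟩,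
    ⟨fun x => (ξ x).getRight (hAc x), fun x y hxy => ?_⟩⟩, ?_⟩
  · have := ξ.monotone hxy
    change (ξ x).isLeft ↔ (ξ y).isLeft
    cases hx : ξ x <;> cases hy : ξ y <;> simp_all
  · have := ξ.monotone (show (x : P) ≤ y from hxy)
    rwa [← Sum.inl_le_inl_iff (β := R₂), Sum.inl_getLeft, Sum.inl_getLeft]
  · have := ξ.monotone (show (x : P) ≤ y from hxy)
    rwa [← Sum.inr_le_inr_iff (α := R₁), Sum.inr_getRight, Sum.inr_getRight]
  · refine OrderHom.ext _ _ (funext fun x => ?_)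
    by_cases hx : x ∈ A
    · exact (glue_left ⟨A, _, _, _⟩ ⟨x, hx⟩).trans (Sum.inl_getLeft _ _)
    · exact (glue_right ⟨A, _, _, _⟩ ⟨x, hx⟩).trans (Sum.inr_getRight _ _)

lemma glue_bijective : Function.Bijective (glue : SumSplit P R₁ R₂ → (P →o R₁ ⊕ R₂)) :=
  ⟨glue_injective, glue_surjective⟩

lemma Gmap_glue_left (s : SumSplit P R₁ R₂) (x : s.part) :
    Gmap s.glue (x : P) = Subtype.val '' Gmap s.left x := by
  refine Gmap_of_fibre (OrderEmbedding.subtype (· ∈ s.part)) s.glue s.left x ?_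
  ext y
  by_cases hy : y ∈ s.part
  · simp [hy, s.glue_left x, s.glue_left ⟨y, hy⟩]
  · simp [hy, s.glue_left x, s.glue_right ⟨y, hy⟩]

lemma Gmap_glue_right (s : SumSplit P R₁ R₂) (x : ↥(s.partᶜ)) :
    Gmap s.glue (x : P) = Subtype.val '' Gmap s.right x := by
  refine Gmap_of_fibre (OrderEmbedding.subtype (· ∈ s.partᶜ)) s.glue s.right x ?_
  ext y
  by_cases hy : y ∈ s.part
  · simp [hy, s.glue_right x, s.glue_left ⟨y, hy⟩]
  · simp [hy, s.glue_right x, s.glue_right ⟨y, hy⟩]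

/-- Apply a transformation of homomorphisms to each of the two parts of a splitting. -/
def map (ρ₁ : ∀ A : Set P, (A →o R₁) → (A →o S₁)) (ρ₂ : ∀ A : Set P, (A →o R₂) → (A →o S₂))
    (s : SumSplit P R₁ R₂) : SumSplit P S₁ S₂ where
  part := s.part
  mem_iff := s.mem_iff
  left := ρ₁ s.part s.left
  right := ρ₂ s.partᶜ s.right

lemma map_injective {ρ₁ : ∀ A : Set P, (A →o R₁) → (A →o S₁)}
    {ρ₂ : ∀ A : Set P, (A →o R₂) → (A →o S₂)} (h₁ : ∀ A, Function.Injective (ρ₁ A))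
    (h₂ : ∀ A, Function.Injective (ρ₂ A)) : Function.Injective (map ρ₁ ρ₂) := by
  rintro ⟨A, hA, f, g⟩ ⟨B, hB, f', g'⟩ h
  obtain rfl : A = B := congrArg part h
  simp only [map, mk.injEq, heq_eq_eq, true_and] at h
  rw [h₁ _ h.1, h₂ _ h.2]

end SumSplit

/-- Compatibility of `⊑_G` with direct sums: the direct sum `A + B` of two posets with
disjoint carriers is modelled by the sum type `A ⊕ B` with the disjoint-union order. -/
theorem stmt4 (R₁ R₂ S₁ S₂ : Type)
    [PartialOrder R₁] [Finite R₁] [Nonempty R₁] [PartialOrder R₂] [Finite R₂] [Nonempty R₂]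
    [PartialOrder S₁] [Finite S₁] [Nonempty S₁] [PartialOrder S₂] [Finite S₂] [Nonempty S₂]
    (h₁ : SqsubG R₁ S₁) (h₂ : SqsubG R₂ S₂) :
    SqsubG (R₁ ⊕ R₂) (S₁ ⊕ S₂) := by
  have key : ∀ (P : Type) [PartialOrder P] [Finite P] [Nonempty P],
      ∃ ρ : (P →o R₁ ⊕ R₂) → (P →o S₁ ⊕ S₂), Function.Injective ρ ∧
        ∀ (ξ : P →o R₁ ⊕ R₂) (x : P), Gmap (⇑(ρ ξ)) x = Gmap (⇑ξ) x := by
    intro P _ _ _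
    choose ρ₁ inj₁ G₁ using fun A : Set P => h₁.exists_scheme A
    choose ρ₂ inj₂ G₂ using fun A : Set P => h₂.exists_scheme A
    let e := Equiv.ofBijective _ (SumSplit.glue_bijective (P := P) (R₁ := R₁) (R₂ := R₂))
    refine ⟨fun ξ => ((e.symm ξ).map ρ₁ ρ₂).glue, SumSplit.glue_injective.comp
      ((SumSplit.map_injective inj₁ inj₂).comp e.symm.injective), fun ξ x => ?_⟩
    obtain ⟨s, rfl⟩ := e.surjective ξ
    simp only [Equiv.symm_apply_apply]
    change _ = Gmap s.glue x
    by_cases hx : x ∈ s.part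
    · rw [s.Gmap_glue_left ⟨x, hx⟩, (s.map ρ₁ ρ₂).Gmap_glue_left ⟨x, hx⟩, ← G₁]
      rfl
    · rw [s.Gmap_glue_right ⟨x, hx⟩, (s.map ρ₁ ρ₂).Gmap_glue_right ⟨x, hx⟩, ← G₂]
      rfl
  choose ρ hρ using key
  exact ⟨ρ, hρ⟩
end

section
/- Let R¹, R², S¹, S² be finite nonempty posets. If R¹ ⊑_G S¹ and R² ⊑_G S², then R¹ × R² ⊑_G S¹ × S², where A × B denotes the product poset with componentwise order. -/
lemma Gmap_subset {P R S : Type} [PartialOrder P] {f : P → R} {g : P → S}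
    (h : ∀ a b, a < b → f a = f b → g a = g b) (x : P) : Gmap f x ⊆ Gmap g x := by
  rintro y ⟨-, -, hxy⟩
  induction hxy with
  | refl => exact ⟨rfl, rfl, .refl⟩
  | @tail b c _ hbc ih =>
    obtain ⟨hb, hc, hlt⟩ := hbc
    have hf : f b = f c := Eq.trans hb (Eq.symm hc)
    have hg : g b = g c := by
      rcases hlt with hlt | hlt
      · exact h b c hlt hf
      · exact (h c b hlt hf.symm).symm
    obtain ⟨hx, hgb, hpath⟩ := ih
    have hgc : c ∈ g ⁻¹' {g x} := Eq.trans hg.symm hgb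
    exact ⟨hx, hgc, hpath.tail ⟨hgb, hgc, hlt⟩⟩

lemma mem_Gmap_of_lt {P R : Type} [PartialOrder P] {f : P → R} {a b : P} (hab : a < b)
    (h : f a = f b) : b ∈ Gmap f a :=
  ⟨rfl, h.symm, .single ⟨rfl, h.symm, .inl hab⟩⟩

/-- Two maps have the same `Gmap` iff they identify the same comparable pairs. -/
lemma Gmap_eq_iff {P R S : Type} [PartialOrder P] {f : P → R} {g : P → S} :
    (∀ x, Gmap f x = Gmap g x) ↔ ∀ a b, a < b → (f a = f b ↔ g a = g b) := by
  refine ⟨fun h a b hab => ⟨fun hf => ?_, fun hg => ?_⟩, fun h x => ?_⟩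
  · have hb := mem_Gmap_of_lt hab hf
    rw [h a] at hb
    exact Eq.symm hb.2.1
  · have hb := mem_Gmap_of_lt hab hg
    rw [← h a] at hb
    exact Eq.symm hb.2.1
  · exact (Gmap_subset (fun a b hab => (h a b hab).1) x).antisymm
      (Gmap_subset (fun a b hab => (h a b hab).2) x)

/-- Compatibility of `⊑_G` with products (componentwise order). -/
theorem stmt7 (R₁ R₂ S₁ S₂ : Type)
    [PartialOrder R₁] [Finite R₁] [Nonempty R₁] [PartialOrder R₂] [Finite R₂] [Nonempty R₂]
    [PartialOrder S₁] [Finite S₁] [Nonempty S₁] [PartialOrder S₂] [Finite S₂] [Nonempty S₂]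
    (h₁ : SqsubG R₁ S₁) (h₂ : SqsubG R₂ S₂) :
    SqsubG (R₁ × R₂) (S₁ × S₂) := by
  obtain ⟨ρ₁, h₁⟩ := h₁
  obtain ⟨ρ₂, h₂⟩ := h₂
  refine ⟨fun P _ _ _ ξ => (ρ₁ P (OrderHom.fst.comp ξ)).prod (ρ₂ P (OrderHom.snd.comp ξ)),
    fun P _ _ _ => ⟨fun ξ η h => ?_, fun ξ => Gmap_eq_iff.2 fun a b hab => ?_⟩⟩
  · have e₁ := (h₁ P).1 (OrderHom.ext _ _
      (funext fun x => congrArg Prod.fst (DFunLike.congr_fun h x)))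
    have e₂ := (h₂ P).1 (OrderHom.ext _ _
      (funext fun x => congrArg Prod.snd (DFunLike.congr_fun h x)))
    exact OrderHom.ext _ _ (funext fun x =>
      Prod.ext (DFunLike.congr_fun e₁ x) (DFunLike.congr_fun e₂ x))
  · have e₁ := Gmap_eq_iff.1 ((h₁ P).2 (OrderHom.fst.comp ξ)) a b hab
    have e₂ := Gmap_eq_iff.1 ((h₂ P).2 (OrderHom.snd.comp ξ)) a b hab
    exact Prod.ext_iff.trans ((and_congr e₁ e₂).trans Prod.ext_iff.symm)
end

section
/- Let Q, R, S be finite nonempty posets with Q and R having disjoint carriers and Q and S having disjoint carriers. If Q + R ⊑ Q + S, then R ⊑ S. -/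
/-- `A` is a union of connected components of `P`: comparable points lie both in `A` or both
outside `A`. -/
def ComparabilityClosed {P : Type} [PartialOrder P] (A : Set P) : Prop :=
  ∀ ⦃a b : P⦄, a ≤ b → (a ∈ A ↔ b ∈ A)

instance orderHom_finite (P R : Type) [PartialOrder P] [PartialOrder R] [Finite P] [Finite R] :
    Finite (P →o R) :=
  Finite.of_injective (fun f : P →o R => (f : P → R)) DFunLike.coe_injective

/-- If `A` and its complement are unions of components of `P`, then a monotone map on `P` is the
same as a pair of monotone maps on the two parts. -/
theorem card_orderHom_split {P : Type} [PartialOrder P] (A : Set P)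
    (hA : ComparabilityClosed A) (R : Type) [PartialOrder R] :
    Nat.card (P →o R) =
      Nat.card (A →o R) * Nat.card ((Aᶜ : Set P) →o R) := by
  classical
  rw [← Nat.card_prod]
  refine Nat.card_congr
    { toFun := fun f => (⟨fun x => f x, fun x y hxy => f.monotone hxy⟩,
        ⟨fun x => f x, fun x y hxy => f.monotone hxy⟩)
      invFun := fun p => ⟨fun x => if hx : x ∈ A then p.1 ⟨x, hx⟩ else p.2 ⟨x, hx⟩, ?_⟩
      left_inv := ?_
      right_inv := ?_ }
  · intro x y hxy
    by_cases hx : x ∈ A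
    · have hy : y ∈ A := (hA hxy).1 hx
      simp only [hx, hy, dite_true]
      exact p.1.monotone hxy
    · have hy : y ∉ A := fun hy => hx ((hA hxy).2 hy)
      simp only [hx, hy, dite_false]
      exact p.2.monotone hxy
  · intro f
    ext x
    by_cases hx : x ∈ A <;> simp [hx] <;> rfl
  · rintro ⟨f, g⟩
    refine Prod.ext ?_ ?_
    · ext x
      simp
    · ext x
      have hx : (x : P) ∉ A := x.2
      simp [hx]

/-- A monotone map from a connected poset into a direct sum lands in a single summand. -/
theorem card_orderHom_sum {P : Type} [PartialOrder P] [Finite P] [Nonempty P]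
    (hP : ∀ A : Set P, ComparabilityClosed A → A.Nonempty → A = Set.univ)
    (Q R : Type) [PartialOrder Q] [PartialOrder R] [Finite Q] [Finite R] :
    Nat.card (P →o Q ⊕ R) = Nat.card (P →o Q) + Nat.card (P →o R) := by
  rw [← Nat.card_sum]
  symm
  let F : (P →o Q) ⊕ (P →o R) → (P →o Q ⊕ R) := Sum.elim
    (fun f => ⟨fun x => Sum.inl (f x), fun x y hxy => Sum.inl_le_inl_iff.2 (f.monotone hxy)⟩)
    (fun f => ⟨fun x => Sum.inr (f x), fun x y hxy => Sum.inr_le_inr_iff.2 (f.monotone hxy)⟩)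
  refine Nat.card_congr (Equiv.ofBijective F ⟨?_, ?_⟩)
  · obtain ⟨x₀⟩ := ‹Nonempty P›
    rintro (f | f) (g | g) hfg
    · congr 1
      ext x
      exact Sum.inl_injective (DFunLike.congr_fun hfg x)
    · exact absurd (DFunLike.congr_fun hfg x₀) Sum.inl_ne_inr
    · exact absurd (DFunLike.congr_fun hfg x₀) Sum.inr_ne_inl
    · congr 1
      ext x
      exact Sum.inr_injective (DFunLike.congr_fun hfg x)
  · intro f
    have hcomp : ∀ ⦃a b : P⦄, a ≤ b → ((f a).isLeft ↔ (f b).isLeft) := by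
      intro a b hab
      have hf := f.monotone hab
      cases ha : f a <;> cases hb : f b <;> simp_all
    by_cases hne : {x : P | (f x).isLeft}.Nonempty
    · have hall : ∀ x, ∃ q, f x = Sum.inl q := fun x => by
        have hx : x ∈ {x : P | (f x).isLeft} := by
          rw [hP _ hcomp hne]
          trivial
        exact Sum.isLeft_iff.1 hx
      choose g hg using hall
      refine ⟨Sum.inl ⟨g, fun x y hxy => ?_⟩, ?_⟩
      · have hf := f.monotone hxy
        rwa [hg, hg, Sum.inl_le_inl_iff] at hf
      · ext x : 2
        exact (hg x).symm
    · have hall : ∀ x, ∃ r, f x = Sum.inr r := fun x => by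
        rcases hx : f x with q | r
        · exact absurd ⟨x, by simp [hx]⟩ hne
        · exact ⟨r, rfl⟩
      choose g hg using hall
      refine ⟨Sum.inr ⟨g, fun x y hxy => ?_⟩, ?_⟩
      · have hf := f.monotone hxy
        rwa [hg, hg, Sum.inr_le_inr_iff] at hf
      · ext x : 2
        exact (hg x).symm

/-- Cancellation for direct sums and `⊑`: if `Q + R ⊑ Q + S` then `R ⊑ S`.
The direct sum of posets with disjoint carriers is modelled by the sum type
with the disjoint-union order. -/
theorem stmt10 (Q R S : Type)
    [PartialOrder Q] [Finite Q] [Nonempty Q]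
    [PartialOrder R] [Finite R] [Nonempty R]
    [PartialOrder S] [Finite S] [Nonempty S]
    (h : Sqsub (Q ⊕ R) (Q ⊕ S)) :
    Sqsub R S := by
  intro P _ _ _
  induction hn : Nat.card P using Nat.strong_induction_on generalizing P with
  | _ n ih =>
    by_cases hP : ∀ A : Set P, ComparabilityClosed A → A.Nonempty → A = Set.univ
    · have hle := h P
      rw [card_orderHom_sum hP, card_orderHom_sum hP] at hle
      exact Nat.le_of_add_le_add_left hle
    · push Not at hP
      obtain ⟨A, hA, hne, huniv⟩ := hP
      obtain ⟨a, ha⟩ := hne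
      obtain ⟨b, hb⟩ := (Set.ne_univ_iff_exists_notMem A).1 huniv
      have : Nonempty A := ⟨⟨a, ha⟩⟩
      have : Nonempty (Aᶜ : Set P) := ⟨⟨b, hb⟩⟩
      rw [card_orderHom_split A hA R, card_orderHom_split A hA S]
      refine Nat.mul_le_mul (ih _ ?_ A rfl) (ih _ ?_ (Aᶜ : Set P) rfl)
      · rw [← hn]
        exact Finite.card_subtype_lt hb
      · rw [← hn]
        exact Finite.card_subtype_lt (x := a) (fun hc => hc ha)
end

section
/- Let Q, R, S be finite nonempty posets with Q and R having disjoint carriers and Q and S having disjoint carriers. If Q + R ⊑_G Q + S, then R ⊑_G S. -/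
/-- Connectedness of a poset, expressed as: every two-valued function that is constant along
comparable pairs is constant. -/
def OrdConnected (C : Type) [PartialOrder C] : Prop :=
  ∀ f : C → Bool, (∀ x y, x ≤ y → f x = f y) → ∀ x y, f x = f y

/-- The label of the connected component of `x`. -/
def comp {P : Type} [PartialOrder P] (x : P) : Quot (fun a b : P => a ≤ b) := Quot.mk _ x

/-- The connected component with label `k`, as a poset. -/
abbrev Comp {P : Type} [PartialOrder P] (k : Quot (fun a b : P => a ≤ b)) : Type :=
  {x : P // comp x = k}

lemma comp_eq {P : Type} [PartialOrder P] {x y : P} (h : x ≤ y) : comp x = comp y :=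
  Quot.sound h

lemma ordConnected_Comp {P : Type} [PartialOrder P] (k : Quot (fun a b : P => a ≤ b)) :
    OrdConnected (Comp k) := by
  classical
  intro f hf x y
  -- Extended by a constant outside the component, `f` factors through the set of components.
  let g : P → Bool := fun z => if h : comp z = k then f ⟨z, h⟩ else true
  have hg : ∀ a b : P, a ≤ b → g a = g b := by
    intro a b hab
    by_cases h : comp a = k
    · have h' : comp b = k := (comp_eq hab).symm.trans h
      simpa [g, h, h'] using hf ⟨a, h⟩ ⟨b, h'⟩ hab
    · have h' : comp b ≠ k := fun h' => h ((comp_eq hab).trans h')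
      simp [g, h, h']
  have key : g x.1 = g y.1 :=
    congrArg (Quot.lift g hg) (x.2.trans y.2.symm : comp x.1 = comp y.1)
  simpa [g, x.2, y.2] using key

lemma Gmap_comp_injective {P R T : Type} [PartialOrder P] (i : R → T)
    (hi : Function.Injective i) (ξ : P → R) : Gmap (fun x => i (ξ x)) = Gmap ξ := by
  funext x
  have : (fun x => i (ξ x)) ⁻¹' {i (ξ x)} = ξ ⁻¹' {ξ x} := by
    ext y
    simp [hi.eq_iff]
  simp only [Gmap, this]

/-- Restriction of a monotone map to a connected component. -/
def restr {P R : Type} [PartialOrder P] [PartialOrder R] (ξ : P →o R)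
    (k : Quot (fun a b : P => a ≤ b)) : Comp k →o R :=
  ⟨fun z => ξ z.1, fun _ _ h => ξ.monotone h⟩

/-- `Gmap ξ x` is computed inside the connected component of `x`: zigzag lines never leave it. -/
lemma mem_Gmap_iff {P R : Type} [PartialOrder P] [PartialOrder R] (ξ : P →o R) (x y : P) :
    y ∈ Gmap ξ x ↔ ∃ h : comp y = comp x,
      (⟨y, h⟩ : Comp (comp x)) ∈ Gmap (restr ξ (comp x)) ⟨x, rfl⟩ := by
  constructor
  · rintro ⟨hx, hy, hr⟩
    suffices H : ∃ h : comp y = comp x,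
        Relation.ReflTransGen (ZigStep (restr ξ (comp x) ⁻¹' {restr ξ (comp x) ⟨x, rfl⟩}))
          ⟨x, rfl⟩ (⟨y, h⟩ : Comp (comp x)) by
      obtain ⟨h, H⟩ := H
      exact ⟨h, rfl, hy, H⟩
    clear hy
    induction hr with
    | refl => exact ⟨rfl, .refl⟩
    | tail _ hs ih =>
      obtain ⟨h, ih⟩ := ih
      obtain ⟨ha, hb, hab⟩ := hs
      have h' := hab.elim (fun l => (comp_eq l.le).symm.trans h) (fun l => (comp_eq l.le).trans h)
      exact ⟨h', ih.tail ⟨ha, hb, hab⟩⟩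
  · rintro ⟨h, hx, hy, hr⟩
    exact ⟨rfl, hy, hr.lift Subtype.val fun a b hs => ⟨hs.1, hs.2.1, hs.2.2⟩⟩

/-- The monotone maps with prescribed `Gmap`. -/
abbrev Fiber (C R : Type) [PartialOrder C] [PartialOrder R] (π : C → Set C) : Type :=
  {ξ : C →o R // Gmap ξ = π}

/-- Composition with the two coprojections into a direct sum. This keeps `Gmap`, as they are
injective. -/
def fiberSum (C Q R : Type) [PartialOrder C] [PartialOrder Q] [PartialOrder R]
    (π : C → Set C) : Fiber C Q π ⊕ Fiber C R π → Fiber C (Q ⊕ R) π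
  | .inl ξ => ⟨⟨fun x => .inl (ξ.1 x), fun _ _ h => Sum.inl_le_inl_iff.2 (ξ.1.monotone h)⟩,
      (Gmap_comp_injective _ Sum.inl_injective _).trans ξ.2⟩
  | .inr ξ => ⟨⟨fun x => .inr (ξ.1 x), fun _ _ h => Sum.inr_le_inr_iff.2 (ξ.1.monotone h)⟩,
      (Gmap_comp_injective _ Sum.inr_injective _).trans ξ.2⟩

lemma fiberSum_bijective (C Q R : Type) [PartialOrder C] [Nonempty C] [PartialOrder Q]
    [PartialOrder R] (hC : OrdConnected C) (π : C → Set C) :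
    Function.Bijective (fiberSum C Q R π) := by
  obtain ⟨c⟩ := ‹Nonempty C›
  constructor
  · rintro (ξ | ξ) (η | η) h
    all_goals
      have h' : ∀ x, _ := fun x => congrArg (fun ζ : Fiber C (Q ⊕ R) π => ζ.1 x) h
    · refine congrArg Sum.inl (Subtype.ext (OrderHom.ext _ _ (funext fun x => ?_)))
      exact Sum.inl_injective (h' x)
    · exact absurd (h' c) Sum.inl_ne_inr
    · exact absurd (h' c) Sum.inr_ne_inl
    · refine congrArg Sum.inr (Subtype.ext (OrderHom.ext _ _ (funext fun x => ?_)))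
      exact Sum.inr_injective (h' x)
  · rintro ⟨ξ, hξ⟩
    have hconst : ∀ x y, (ξ x).isLeft = (ξ y).isLeft := by
      refine hC (fun x => (ξ x).isLeft) fun x y hxy => ?_
      have hle := ξ.monotone hxy
      revert hle
      rcases ξ x with a | a <;> rcases ξ y with b | b <;> simp
    rcases hc : ξ c with a | a
    · have hl : ∀ x, ∃ q, ξ x = Sum.inl q := fun x =>
        Sum.isLeft_iff.1 (by rw [hconst x c, hc]; rfl)
      choose f hf using hl
      have hm : Monotone f := fun x y hxy => by
        have := ξ.monotone hxy
        rwa [hf, hf, Sum.inl_le_inl_iff] at this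
      have he : ⇑ξ = fun x => Sum.inl (f x) := funext hf
      refine ⟨.inl ⟨⟨f, hm⟩, ?_⟩, Subtype.ext (OrderHom.ext _ _ he.symm)⟩
      rw [← hξ, he]
      exact (Gmap_comp_injective _ Sum.inl_injective f).symm
    · have hl : ∀ x, ∃ q, ξ x = Sum.inr q := fun x =>
        Sum.isRight_iff.1 (by simpa [hc] using hconst x c)
      choose f hf using hl
      have hm : Monotone f := fun x y hxy => by
        have := ξ.monotone hxy
        rwa [hf, hf, Sum.inr_le_inr_iff] at this
      have he : ⇑ξ = fun x => Sum.inr (f x) := funext hf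
      refine ⟨.inr ⟨⟨f, hm⟩, ?_⟩, Subtype.ext (OrderHom.ext _ _ he.symm)⟩
      rw [← hξ, he]
      exact (Gmap_comp_injective _ Sum.inr_injective f).symm

lemma card_fiber_sum (C Q R : Type) [PartialOrder C] [Finite C] [Nonempty C] [PartialOrder Q]
    [Finite Q] [PartialOrder R] [Finite R] (hC : OrdConnected C) (π : C → Set C) :
    Nat.card (Fiber C (Q ⊕ R) π) = Nat.card (Fiber C Q π) + Nat.card (Fiber C R π) := by
  have : Finite (C →o Q) := DFunLike.finite _
  have : Finite (C →o R) := DFunLike.finite _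
  rw [← Nat.card_congr (Equiv.ofBijective _ (fiberSum_bijective C Q R hC π)), Nat.card_sum]

/-- On a connected poset, cancelling the maps into `Q` fibrewise leaves an injection
`H(C,R) → H(C,S)` that preserves `Gmap`. -/
lemma exists_of_connected (Q R S : Type) [PartialOrder Q] [Finite Q] [PartialOrder R] [Finite R]
    [PartialOrder S] [Finite S] (h : SqsubG (Q ⊕ R) (Q ⊕ S))
    (C : Type) [PartialOrder C] [Finite C] [Nonempty C] (hC : OrdConnected C) :
    ∃ ρ : (C →o R) → (C →o S), Function.Injective ρ ∧ ∀ ξ, Gmap (ρ ξ) = Gmap ξ := by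
  have : Finite (C →o R) := DFunLike.finite _
  have : Finite (C →o S) := DFunLike.finite _
  have : Finite (C →o Q ⊕ S) := DFunLike.finite _
  obtain ⟨σ, hσ⟩ := h
  obtain ⟨hinj, hG⟩ := hσ C
  have hle : ∀ π : C → Set C, Nat.card (Fiber C R π) ≤ Nat.card (Fiber C S π) := by
    intro π
    have h1 : Nat.card (Fiber C (Q ⊕ R) π) ≤ Nat.card (Fiber C (Q ⊕ S) π) :=
      Nat.card_le_card_of_injective
        (fun ξ => ⟨σ C ξ.1, (funext (hG ξ.1)).trans ξ.2⟩)
        fun ξ η e => Subtype.ext (hinj (congrArg Subtype.val e))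
    rw [card_fiber_sum C Q R hC, card_fiber_sum C Q S hC] at h1
    omega
  have hemb : ∀ π : C → Set C, ∃ e : Fiber C R π → Fiber C S π, Function.Injective e := by
    intro π
    have := Fintype.ofFinite (Fiber C R π)
    have := Fintype.ofFinite (Fiber C S π)
    have hp := hle π
    rw [Nat.card_eq_fintype_card, Nat.card_eq_fintype_card] at hp
    obtain ⟨e⟩ := Function.Embedding.nonempty_of_card_le hp
    exact ⟨e, e.injective⟩
  choose e he using hemb
  refine ⟨fun ξ => (e (Gmap ξ) ⟨ξ, rfl⟩).1, fun ξ η hξη => ?_, fun ξ => (e (Gmap ξ) ⟨ξ, rfl⟩).2⟩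
  have hg : Gmap ξ = Gmap η :=
    (e (Gmap ξ) ⟨ξ, rfl⟩).2.symm.trans
      ((congrArg (fun ζ : C →o S => Gmap ζ) hξη).trans (e (Gmap η) ⟨η, rfl⟩).2)
  -- Generalizing `Gmap ξ` and `Gmap η` to one `π` puts both maps into the same fibre.
  have aux : ∀ (π π' : C → Set C) (hp : Gmap ξ = π) (hp' : Gmap η = π'), π = π' →
      (e π ⟨ξ, hp⟩).1 = (e π' ⟨η, hp'⟩).1 → ξ = η := by
    rintro π _ hp hp' rfl heq
    exact congrArg Subtype.val (he π (Subtype.ext heq))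
  exact aux _ _ rfl rfl hg hξη

/-- Cancellation for direct sums and `⊑_G`: if `Q + R ⊑_G Q + S` then `R ⊑_G S`.
The direct sum of posets with disjoint carriers is modelled by the sum type
with the disjoint-union order. -/
theorem stmt11 (Q R S : Type)
    [PartialOrder Q] [Finite Q] [Nonempty Q]
    [PartialOrder R] [Finite R] [Nonempty R]
    [PartialOrder S] [Finite S] [Nonempty S]
    (h : SqsubG (Q ⊕ R) (Q ⊕ S)) :
    SqsubG R S := by
  suffices H : ∀ (P : Type) [PartialOrder P] [Finite P] [Nonempty P],
      ∃ ρ : (P →o R) → (P →o S), Function.Injective ρ ∧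
        ∀ (ξ : P →o R) (x : P), Gmap (⇑(ρ ξ)) x = Gmap (⇑ξ) x from
    ⟨fun P _ _ _ => (H P).choose, fun P _ _ _ => (H P).choose_spec⟩
  intro P _ _ _
  have hcomp : ∀ k : Quot (fun a b : P => a ≤ b), ∃ ρ : (Comp k →o R) → (Comp k →o S),
      Function.Injective ρ ∧ ∀ ξ, Gmap (ρ ξ) = Gmap ξ := by
    intro k
    have : Nonempty (Comp k) := by
      obtain ⟨x, hx⟩ := Quot.exists_rep k
      exact ⟨⟨x, hx⟩⟩
    exact exists_of_connected Q R S h (Comp k) (ordConnected_Comp k)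
  choose ρ hinj hG using hcomp
  have hval : ∀ (ξ : P →o R) (k) (z : Comp k),
      ρ (comp z.1) (restr ξ (comp z.1)) ⟨z.1, rfl⟩ = ρ k (restr ξ k) z := by
    rintro ξ _ ⟨z, rfl⟩
    rfl
  let τ : (P →o R) → (P →o S) := fun ξ =>
    ⟨fun x => ρ (comp x) (restr ξ (comp x)) ⟨x, rfl⟩, fun x y hxy =>
      (hval ξ (comp y) ⟨x, comp_eq hxy⟩).trans_le
        ((ρ (comp y) (restr ξ (comp y))).monotone hxy)⟩
  have hτ : ∀ ξ k, restr (τ ξ) k = ρ k (restr ξ k) := fun ξ k =>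
    OrderHom.ext _ _ (funext fun z => hval ξ k z)
  refine ⟨τ, fun ξ η e => ?_, fun ξ x => ?_⟩
  · refine OrderHom.ext _ _ (funext fun x => ?_)
    have hk : restr ξ (comp x) = restr η (comp x) := by
      apply hinj
      rw [← hτ, ← hτ, e]
    exact congrArg (fun ζ : Comp (comp x) →o R => ζ ⟨x, rfl⟩) hk
  · ext y
    rw [mem_Gmap_iff, mem_Gmap_iff, hτ, hG]
end

section
/- Let A, B, C be nonempty, pairwise disjoint sets with A finite, and let f : A ∪ B → A ∪ C be an injective map. Then for every b ∈ B there exists an integer n(b) ≥ 1 such that the iterate f^{n(b)}(b) lies in C while f^ν(b) ∈ A for all 1 ≤ ν ≤ n(b) − 1. Moreover, the map F : B → C defined by F(b) ≔ f^{n(b)}(b) is injective. -/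
/-!
An orbit that starts in `B` and stays in `A` until some time `m` can be traced back uniquely:
injectivity of `f` on `A ∪ B` lets one cancel `f`, and no point `f^[k] b` with `k ≥ 1` lies in `B`,
since `f` takes values in `A ∪ C`. So such orbits that meet do so at equal times and come from the
same starting point (`orbit_eq_of_meet`). For a single orbit this says that its points are
pairwise distinct, so it cannot remain in the finite set `A` forever and must enter `C`. For two
orbits it is the injectivity of `F`.
-/

/-- If the orbit of `b ∈ B` stays in `A` at times `1, …, m`, its point at time `m + 1` is not
in `B`. -/
theorem iterate_notMem_of_stay {U : Type} {A B C : Set U}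
    (hAB : Disjoint A B) (hBC : Disjoint B C) {f : U → U}
    (hmaps : Set.MapsTo f (A ∪ B) (A ∪ C)) {b : U} (hb : b ∈ B) (m : ℕ)
    (h : ∀ ν, 1 ≤ ν → ν ≤ m → f^[ν] b ∈ A) : f^[m + 1] b ∉ B := by
  have hm : f^[m] b ∈ A ∪ B := by
    rcases Nat.eq_zero_or_pos m with rfl | hpos
    · exact Or.inr hb
    · exact Or.inl (h m hpos le_rfl)
  rw [Function.iterate_succ_apply']
  intro hB
  rcases hmaps hm with hA | hC
  · exact Set.disjoint_left.mp hAB hA hB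
  · exact Set.disjoint_left.mp hBC hB hC

/-- Two orbits from `B`, staying in `A` strictly between time `0` and their meeting point, meet
only if they have the same length and the same start. -/
theorem orbit_eq_of_meet {U : Type} {A B C : Set U}
    (hAB : Disjoint A B) (hBC : Disjoint B C) {f : U → U}
    (hmaps : Set.MapsTo f (A ∪ B) (A ∪ C)) (hinj : Set.InjOn f (A ∪ B))
    {b b' : U} (hb : b ∈ B) (hb' : b' ∈ B) (m n : ℕ)
    (h : ∀ ν, 1 ≤ ν → ν ≤ m - 1 → f^[ν] b ∈ A)
    (h' : ∀ ν, 1 ≤ ν → ν ≤ n - 1 → f^[ν] b' ∈ A)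
    (heq : f^[m] b = f^[n] b') : m = n ∧ b = b' := by
  induction m generalizing n with
  | zero =>
    cases n with
    | zero => exact ⟨rfl, heq⟩
    | succ n =>
      have hn := iterate_notMem_of_stay hAB hBC hmaps hb' n h'
      rw [← heq] at hn
      exact absurd hb hn
  | succ m ih =>
    cases n with
    | zero =>
      have hm := iterate_notMem_of_stay hAB hBC hmaps hb m h
      rw [heq] at hm
      exact absurd hb' hm
    | succ n =>
      have hm : f^[m] b ∈ A ∪ B := by
        rcases Nat.eq_zero_or_pos m with rfl | hpos
        · exact Or.inr hb
        · exact Or.inl (h m hpos le_rfl)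
      have hn : f^[n] b' ∈ A ∪ B := by
        rcases Nat.eq_zero_or_pos n with rfl | hpos
        · exact Or.inr hb'
        · exact Or.inl (h' n hpos le_rfl)
      rw [Function.iterate_succ_apply', Function.iterate_succ_apply'] at heq
      obtain ⟨hmn, hbb⟩ := ih n (fun ν h1 h2 => h ν h1 (by omega))
        (fun ν h1 h2 => h' ν h1 (by omega)) (hinj hm hn heq)
      exact ⟨by rw [hmn], hbb⟩

/-- Let `A, B, C` be nonempty pairwise disjoint sets, `A` finite, and let
`f : A ∪ B → A ∪ C` be injective.  Then every `b ∈ B` admits a (necessarily unique)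
`n(b) ≥ 1` with `f^{n(b)}(b) ∈ C` and `f^ν(b) ∈ A` for `1 ≤ ν ≤ n(b) - 1`, and the
map `F : B → C`, `b ↦ f^{n(b)}(b)` is injective. -/
theorem stmt12 {U : Type} (A B C : Set U)
    (hAne : A.Nonempty) (hBne : B.Nonempty) (hCne : C.Nonempty)
    (hAfin : A.Finite)
    (hAB : Disjoint A B) (hAC : Disjoint A C) (hBC : Disjoint B C)
    (f : U → U)
    (hmaps : Set.MapsTo f (A ∪ B) (A ∪ C))
    (hinj : Set.InjOn f (A ∪ B)) :
    (∀ b ∈ B, ∃ n : ℕ, 1 ≤ n ∧ f^[n] b ∈ C ∧ ∀ ν, 1 ≤ ν → ν ≤ n - 1 → f^[ν] b ∈ A) ∧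
    ∀ n : U → ℕ,
      (∀ b ∈ B, 1 ≤ n b ∧ f^[n b] b ∈ C ∧ ∀ ν, 1 ≤ ν → ν ≤ n b - 1 → f^[ν] b ∈ A) →
      Set.InjOn (fun b => f^[n b] b) B := by
  refine ⟨fun b hb => ?_, fun n hn b hb b' hb' heq => ?_⟩
  · by_contra! hno
    -- The orbit never leaves `A`: a first exit from `A` would have to be into `C`.
    have hstay : ∀ k, f^[k + 1] b ∈ A := by
      intro k
      induction k using Nat.strong_induction_on with
      | _ k ih =>
        have hprev : ∀ ν, 1 ≤ ν → ν ≤ k → f^[ν] b ∈ A := by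
          intro ν h1 h2
          obtain ⟨j, rfl⟩ := Nat.exists_eq_add_of_le' h1
          exact ih j (by omega)
        have hk : f^[k] b ∈ A ∪ B := by
          rcases Nat.eq_zero_or_pos k with rfl | hpos
          · exact Or.inr hb
          · exact Or.inl (hprev k hpos le_rfl)
        have hnext := hmaps hk
        rw [← Function.iterate_succ_apply' f] at hnext
        rcases hnext with hA | hC
        · exact hA
        · obtain ⟨ν, h1, h2, h3⟩ := hno (k + 1) (by omega) hC
          exact absurd (hprev ν h1 h2) h3
    have hpos : ∀ ν, 1 ≤ ν → f^[ν] b ∈ A := by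
      intro ν h1
      obtain ⟨j, rfl⟩ := Nat.exists_eq_add_of_le' h1
      exact hstay j
    refine Set.infinite_of_injective_forall_mem (f := fun k => f^[k + 1] b) ?_ hstay hAfin
    intro i j hij
    have := (orbit_eq_of_meet hAB hBC hmaps hinj hb hb (i + 1) (j + 1)
      (fun ν h1 _ => hpos ν h1) (fun ν h1 _ => hpos ν h1) hij).1
    omega
  · exact (orbit_eq_of_meet hAB hBC hmaps hinj hb hb' (n b) (n b')
      (hn b hb).2.2 (hn b' hb').2.2 heq).2
end

section
/- Let Q, R, S be finite nonempty posets with Q and R having disjoint carriers and Q and S having disjoint carriers. If Q ⊕ R ⊑_G Q ⊕ S, then R ⊑_G S. -/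
/-- Components of fibres are computed inside an embedded subposet, provided a fibre meeting the
subposet cannot be left by a single zigzag step. -/
lemma Gmap_image {P P' T : Type} [PartialOrder P] [PartialOrder P'] (e : P ↪o P') (ζ : P' → T)
    (he : ∀ p y, ζ y = ζ (e p) → (e p < y ∨ y < e p) → y ∈ Set.range e) (p : P) :
    Gmap ζ (e p) = e '' Gmap (fun q => ζ (e q)) p := by
  ext z
  constructor
  · rintro ⟨-, -, hz⟩
    induction hz with
    | refl => exact ⟨p, ⟨rfl, rfl, .refl⟩, rfl⟩
    | @tail b c _ hbc ih =>
      obtain ⟨y, ⟨-, hy, hpy⟩, rfl⟩ := ih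
      obtain ⟨-, hc, hlt⟩ := hbc
      have hy' : ζ (e y) = ζ (e p) := hy
      have hc' : ζ c = ζ (e p) := hc
      obtain ⟨w, rfl⟩ := he y c (hc'.trans hy'.symm) hlt
      exact ⟨w, ⟨rfl, hc', hpy.tail ⟨hy', hc', by simpa using hlt⟩⟩, rfl⟩
  · rintro ⟨y, ⟨-, hy, hpy⟩, rfl⟩
    refine ⟨rfl, hy, hpy.lift e ?_⟩
    rintro a b ⟨ha, hb, hab⟩
    exact ⟨ha, hb, by simpa using hab⟩

lemma ne_of_Gmap_eq {P T T' : Type} [PartialOrder P] (ξ : P → T) (η : P → T') {x y : P}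
    (h : Gmap η x = Gmap ξ x) (hxy : x < y) (hne : ξ x ≠ ξ y) : η x ≠ η y := by
  intro heq
  have hy : y ∈ Gmap η x := ⟨rfl, heq.symm, .single ⟨rfl, heq.symm, .inl hxy⟩⟩
  rw [h] at hy
  exact hne hy.2.1.symm

/-- The homomorphisms from `P` to `R` whose fibre components are given by `𝓖`. -/
abbrev GFiber (P R : Type) [PartialOrder P] [PartialOrder R] (𝓖 : P → Set P) : Type :=
  {ξ : P →o R // ∀ x, Gmap ξ x = 𝓖 x}

lemma exists_max_chain (Q : Type) [PartialOrder Q] [Finite Q] :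
    ∃ k : ℕ, (∃ f : Fin k → Q, StrictMono f) ∧ ¬ ∃ f : Fin (k + 1) → Q, StrictMono f := by
  by_contra! hcon
  have hall : ∀ k : ℕ, ∃ f : Fin k → Q, StrictMono f := by
    intro k
    induction k with
    | zero => exact ⟨Fin.elim0, fun a => a.elim0⟩
    | succ k ih => exact hcon k ih
  obtain ⟨f, hf⟩ := hall (Nat.card Q + 1)
  have := Nat.card_le_card_of_injective f hf.injective
  simp at this

/-- The ordinal sum of a `k`-element chain and `n` disjoint copies of `P`. -/
abbrev Tower (k n : ℕ) (P : Type) : Type := Fin k ⊕ₗ (Σ _ : Fin n, P)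

section Tower

variable {P Q R S : Type} [PartialOrder P] [PartialOrder Q] [PartialOrder R] [PartialOrder S]
  {k n : ℕ}

/-- The inclusion of the `i`-th copy of `P`. -/
def towerCopy (k : ℕ) (i : Fin n) : P ↪o Tower k n P where
  toFun p := toLex (.inr ⟨i, p⟩)
  inj' a b h := by simpa using h
  map_rel_iff' {a b} := Sum.Lex.inr_le_inr_iff.trans Sigma.mk_le_mk_iff

/-- Assembles a chain in `Q` and homomorphisms from `P` to `R` into a map to `Q ⊕ R`. -/
def towerHom (f : Fin k → Q) (hf : StrictMono f) (ξ : Fin n → (P →o R)) :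
    Tower k n P →o Q ⊕ₗ R where
  toFun z := toLex (Sum.map f (fun s : (Σ _ : Fin n, P) => ξ s.1 s.2) (ofLex z))
  monotone' := by
    intro a b hab
    induction a using Lex.rec with | _ a
    induction b using Lex.rec with | _ b
    rcases a with a | ⟨i, p⟩ <;> rcases b with b | ⟨j, q⟩
    · simpa using hf.monotone (by simpa using hab)
    · simp
    · simp at hab
    · rw [Sum.Lex.inr_le_inr_iff] at hab
      obtain ⟨_, _, _, h⟩ := hab
      simpa using (ξ i).monotone h

lemma towerHom_inl (f : Fin k → Q) (hf : StrictMono f) (ξ : Fin n → (P →o R)) (a : Fin k) :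
    towerHom f hf ξ (toLex (.inl a)) = toLex (.inl (f a)) := rfl

lemma towerHom_copy (f : Fin k → Q) (hf : StrictMono f) (ξ : Fin n → (P →o R)) (i : Fin n)
    (p : P) : towerHom f hf ξ (towerCopy k i p) = toLex (.inr (ξ i p)) := rfl

lemma towerHom_ne (f : Fin k → Q) (hf : StrictMono f) (ξ : Fin n → (P →o R)) (a : Fin k)
    (z : Tower k n P) (hz : toLex (.inl a) < z) :
    towerHom f hf ξ (toLex (.inl a)) ≠ towerHom f hf ξ z := by
  induction z using Lex.rec with | _ z
  rcases z with b | ⟨j, q⟩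
  · rw [towerHom_inl, towerHom_inl]
    simpa using (hf (by simpa using hz)).ne
  · exact fun h => by simpa [towerHom_inl] using h.trans (towerHom_copy f hf ξ j q)

lemma mem_range_towerCopy {T : Type} (ζ : Tower k n P → T) (i : Fin n)
    (hne : ∀ (a : Fin k) z, toLex (.inl a) < z → ζ (toLex (.inl a)) ≠ ζ z) (p : P)
    (y : Tower k n P) (hy : ζ y = ζ (towerCopy k i p))
    (hlt : towerCopy k i p < y ∨ y < towerCopy k i p) : y ∈ Set.range (towerCopy (P := P) k i) := by
  induction y using Lex.rec with | _ y
  rcases y with b | ⟨j, q⟩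
  · exact absurd hy (hne b _ (Sum.Lex.inl_lt_inr _ _))
  · have : i = j := by
      rcases hlt with h | h
      · have h' : (⟨i, p⟩ : Σ _ : Fin n, P) ≤ ⟨j, q⟩ := (Sum.Lex.inr_lt_inr_iff.1 h).le
        exact (Sigma.le_def.1 h').1
      · have h' : (⟨j, q⟩ : Σ _ : Fin n, P) ≤ ⟨i, p⟩ := (Sum.Lex.inr_lt_inr_iff.1 h).le
        exact (Sigma.le_def.1 h').1.symm
    subst this
    exact ⟨q, rfl⟩

/-- If the `k`-chain is mapped strictly below the copies of `P`, and `Q` has no chain of size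
`k + 1`, then every copy of `P` is mapped to `S`. -/
lemma exists_restrict (hmax : ¬ ∃ f : Fin (k + 1) → Q, StrictMono f)
    (η : Tower k n P →o Q ⊕ₗ S)
    (hne : ∀ (a : Fin k) z, toLex (.inl a) < z → η (toLex (.inl a)) ≠ η z) (i : Fin n) :
    ∃ ξ : P →o S, ∀ p, η (towerCopy k i p) = toLex (.inr (ξ p)) := by
  have hlt : ∀ (a : Fin k) z, toLex (.inl a) < z → η (toLex (.inl a)) < η z :=
    fun a z h => lt_of_le_of_ne (η.monotone h.le) (hne a z h)
  have hS : ∀ p, ∃ s, η (towerCopy k i p) = toLex (.inr s) := by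
    intro p
    rcases hq : ofLex (η (towerCopy k i p)) with q | s
    · have hq' : η (towerCopy k i p) = toLex (.inl q) := hq
      have hA : ∀ a : Fin k, ∃ q', η (toLex (.inl a)) = toLex (.inl q') := by
        intro a
        have h1 := hlt a (towerCopy k i p) (Sum.Lex.inl_lt_inr _ _)
        rw [hq'] at h1
        rcases ha : ofLex (η (toLex (.inl a))) with q' | s
        · exact ⟨q', ha⟩
        · have ha' : η (toLex (.inl a)) = toLex (.inr s) := ha
          rw [ha'] at h1
          exact absurd h1 Sum.Lex.not_inr_lt_inl
      choose g hg using hA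
      refine absurd ⟨Fin.snoc (α := fun _ => Q) g q, ?_⟩ hmax
      intro a b hab
      induction b using Fin.lastCases with
      | last =>
        induction a using Fin.lastCases with
        | last => exact absurd hab (lt_irrefl _)
        | cast a =>
          have h1 := hlt a (towerCopy k i p) (Sum.Lex.inl_lt_inr _ _)
          rw [hq', hg] at h1
          simpa using h1
      | cast b =>
        induction a using Fin.lastCases with
        | last => exact absurd hab (not_lt_of_ge (Fin.le_last _))
        | cast a =>
          have h1 := hlt a (toLex (.inl b)) (by simpa using hab)
          rw [hg, hg] at h1
          simpa using h1
    · exact ⟨s, hq⟩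
  choose g hg using hS
  refine ⟨⟨g, fun p p' hp => ?_⟩, hg⟩
  have := η.monotone ((towerCopy k i).monotone hp)
  rw [hg, hg] at this
  simpa using this

lemma Gmap_copy {T : Type} [PartialOrder T] {T' : Type} (ζ : Tower k n P → T') (c : T → T')
    (hc : Function.Injective c)
    (hne : ∀ (a : Fin k) z, toLex (.inl a) < z → ζ (toLex (.inl a)) ≠ ζ z)
    (i : Fin n) (ξ : P →o T) (hξ : ∀ p, ζ (towerCopy k i p) = c (ξ p)) (p : P) :
    Gmap ζ (towerCopy k i p) = towerCopy k i '' Gmap ξ p := by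
  rw [Gmap_image (towerCopy k i) ζ (mem_range_towerCopy ζ i hne)]
  congr 1
  simp only [hξ, Gmap]
  congr 1
  ext q
  simp [hc.eq_iff]

end Tower

lemma le_of_pow_le_mul_pow {x y C : ℕ} (h : ∀ n : ℕ, n ≠ 0 → x ^ n ≤ C * y ^ n) : x ≤ y := by
  by_contra! hlt
  rcases Nat.eq_zero_or_pos y with rfl | hy
  · have := h 1 one_ne_zero
    simp at this
    omega
  · have hy' : (0 : ℝ) < y := by exact_mod_cast hy
    have h1 : (1 : ℝ) < x / y := by
      rw [one_lt_div hy']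
      exact_mod_cast hlt
    obtain ⟨n, hn⟩ := pow_unbounded_of_one_lt (C : ℝ) h1
    have hn1 : (C : ℝ) < (x / y : ℝ) ^ (n + 1) :=
      hn.trans_le (pow_le_pow_right₀ h1.le n.le_succ)
    rw [div_pow, lt_div_iff₀ (by positivity)] at hn1
    have := h (n + 1) n.succ_ne_zero
    have : (x : ℝ) ^ (n + 1) ≤ C * (y : ℝ) ^ (n + 1) := by exact_mod_cast this
    linarith

lemma card_GFiber_le {P Q R S : Type} [PartialOrder P] [Finite P] [Nonempty P]
    [PartialOrder Q] [Finite Q] [PartialOrder R] [PartialOrder S] [Finite S]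
    (h : SqsubG (Q ⊕ₗ R) (Q ⊕ₗ S)) (𝓖 : P → Set P) :
    Nat.card (GFiber P R 𝓖) ≤ Nat.card (GFiber P S 𝓖) := by
  obtain ⟨ρ, hρ⟩ := h
  obtain ⟨k, ⟨f, hf⟩, hmax⟩ := exists_max_chain Q
  have : Finite (P →o S) := Finite.of_injective (fun g => (g : P → S)) DFunLike.coe_injective
  have : Finite (Q ⊕ₗ S) := inferInstanceAs (Finite (Q ⊕ S))
  refine le_of_pow_le_mul_pow (C := Nat.card (Fin k → Q ⊕ₗ S)) fun n hn => ?_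
  have : NeZero n := ⟨hn⟩
  have : Finite (Tower k n P) := inferInstanceAs (Finite (Fin k ⊕ Σ _ : Fin n, P))
  have : Nonempty (Tower k n P) := ⟨toLex (.inr ⟨0, Classical.arbitrary P⟩)⟩
  obtain ⟨hinj, hG⟩ := hρ (Tower k n P)
  set ξ' : (Fin n → GFiber P R 𝓖) → (Tower k n P →o Q ⊕ₗ R) :=
    fun ξ => towerHom f hf fun i => (ξ i).1 with hξ'
  have hne : ∀ ξ (a : Fin k) z, toLex (.inl a) < z →
      ρ _ (ξ' ξ) (toLex (.inl a)) ≠ ρ _ (ξ' ξ) z := fun ξ a z hz =>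
    ne_of_Gmap_eq _ _ (hG _ _) hz (towerHom_ne f hf _ a z hz)
  have hex : ∀ ξ i, ∃ η : GFiber P S 𝓖, ∀ p,
      ρ _ (ξ' ξ) (towerCopy k i p) = toLex (.inr (η.1 p)) := by
    intro ξ i
    obtain ⟨η, hη⟩ := exists_restrict hmax _ (hne ξ) i
    refine ⟨⟨η, fun p => ?_⟩, hη⟩
    have h1 := Gmap_copy (ρ _ (ξ' ξ)) (fun s => toLex (.inr s))
      (fun _ _ hst => by simpa using hst) (hne ξ) i η hη p
    have h2 := Gmap_copy (ξ' ξ) (fun s => toLex (.inr s))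
      (fun _ _ hst => by simpa using hst) (towerHom_ne f hf _) i (ξ i).1
      (towerHom_copy f hf _ i) p
    rw [hG, h2] at h1
    rw [← (ξ i).2 p]
    exact ((towerCopy k i).injective.image_injective h1).symm
  choose η hη using hex
  have hΦ : Function.Injective (fun ξ : Fin n → GFiber P R 𝓖 =>
      ((fun a => ρ _ (ξ' ξ) (toLex (.inl a)), η ξ) :
        (Fin k → Q ⊕ₗ S) × (Fin n → GFiber P S 𝓖))) := by
    intro ξ₁ ξ₂ h12
    obtain ⟨hA, hB⟩ := Prod.mk.inj h12
    have hρeq : ρ _ (ξ' ξ₁) = ρ _ (ξ' ξ₂) := by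
      ext z : 2
      induction z using Lex.rec with | _ z
      rcases z with a | ⟨i, p⟩
      · exact congrFun hA a
      · have h1 := hη ξ₁ i p
        rw [hB, ← hη ξ₂ i p] at h1
        exact h1
    have heq := hinj hρeq
    ext i p
    have := DFunLike.congr_fun heq (towerCopy k i p)
    simpa [hξ', towerHom_copy] using this
  have := Nat.card_le_card_of_injective _ hΦ
  simpa [Nat.card_prod, Nat.card_fun] using this

/-- Cancellation for ordinal sums and `⊑_G`: if `Q ⊕ R ⊑_G Q ⊕ S` then `R ⊑_G S`.
The ordinal sum of posets with disjoint carriers is modelled by the lexicographic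
sum type `⊕ₗ`. -/
theorem stmt13 (Q R S : Type)
    [PartialOrder Q] [Finite Q] [Nonempty Q]
    [PartialOrder R] [Finite R] [Nonempty R]
    [PartialOrder S] [Finite S] [Nonempty S]
    (h : SqsubG (Q ⊕ₗ R) (Q ⊕ₗ S)) :
    SqsubG R S := by
  have key : ∀ (P : Type) [PartialOrder P] [Finite P] [Nonempty P] (𝓖 : P → Set P),
      ∃ j : GFiber P R 𝓖 → GFiber P S 𝓖, Function.Injective j := by
    intro P _ _ _ 𝓖
    have : Finite (P →o R) := Finite.of_injective (fun g => (g : P → R)) DFunLike.coe_injective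
    have : Finite (P →o S) := Finite.of_injective (fun g => (g : P → S)) DFunLike.coe_injective
    have := Fintype.ofFinite (GFiber P R 𝓖)
    have := Fintype.ofFinite (GFiber P S 𝓖)
    obtain ⟨j⟩ := Function.Embedding.nonempty_of_card_le
      (by simpa only [Nat.card_eq_fintype_card] using card_GFiber_le h 𝓖)
    exact ⟨j, j.injective⟩
  choose j hj using key
  refine ⟨fun P _ _ _ ξ => (j P (Gmap ξ) ⟨ξ, fun _ => rfl⟩).1, fun P _ _ _ => ⟨?_, ?_⟩⟩
  · intro ξ₁ ξ₂ h12
    have hG : Gmap (⇑ξ₁) = Gmap (⇑ξ₂) := by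
      ext1 x
      rw [← (j P (Gmap ξ₁) ⟨ξ₁, fun _ => rfl⟩).2 x, ← (j P (Gmap ξ₂) ⟨ξ₂, fun _ => rfl⟩).2 x]
      exact congrArg (fun g : P →o S => Gmap g x) h12
    -- Once the component maps agree, both images come from one and the same injection.
    have aux : ∀ (𝓖 : P → Set P) (h₁ : Gmap (⇑ξ₁) = 𝓖) (h₂ : Gmap (⇑ξ₂) = 𝓖),
        (j P (Gmap ξ₁) ⟨ξ₁, fun _ => rfl⟩).1 = (j P 𝓖 ⟨ξ₁, congrFun h₁⟩).1 ∧
        (j P (Gmap ξ₂) ⟨ξ₂, fun _ => rfl⟩).1 = (j P 𝓖 ⟨ξ₂, congrFun h₂⟩).1 := by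
      intro 𝓖 h₁ h₂
      constructor
      · subst h₁; rfl
      · subst h₂; rfl
    obtain ⟨e₁, e₂⟩ := aux _ hG rfl
    have := hj P _ (Subtype.ext (e₁.symm.trans (h12.trans e₂)))
    exact congrArg Subtype.val this
  · intro ξ x
    exact (j P (Gmap ξ) ⟨ξ, fun _ => rfl⟩).2 x
end

section
/- Let Q, R, S be finite nonempty posets and let ρ be a strong G-scheme from Q × R to Q × S which in addition satisfies: for every finite nonempty poset P, all ξ, ζ ∈ H(P,Q) and all θ ∈ H(P,R), if ξ ≠ ζ then the first component of ρ_P((ξ,θ)) differs from the first component of ρ_P((ζ,θ)) (identifying H(P, Q × R) with H(P,Q) × H(P,R) and H(P, Q × S) with H(P,Q) × H(P,S)). Then R ⊑_G S. -/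
/-- `ξ` is constant on each of the sets `Gmap θ x`. -/
def ConstOnG {P Q R : Type} [PartialOrder P] (ξ : P → Q) (θ : P → R) : Prop :=
  ∀ x, ∀ y ∈ Gmap θ x, ξ y = ξ x

theorem Gmap_prod_eq {P Q R : Type} [PartialOrder P] {ξ : P → Q} {θ : P → R}
    (h : ConstOnG ξ θ) (x : P) : Gmap (fun p => (ξ p, θ p)) x = Gmap θ x := by
  ext y
  constructor
  · rintro ⟨_, hy, hr⟩
    refine ⟨rfl, congrArg Prod.snd hy, Relation.ReflTransGen.mono ?_ _ _ hr⟩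
    rintro a b ⟨ha, hb, hab⟩
    exact ⟨congrArg Prod.snd ha, congrArg Prod.snd hb, hab⟩
  · rintro ⟨_, hy, hr⟩
    -- Every initial segment of the zigzag line stays in `Gmap θ x`, where `ξ` is constant.
    have key : ∀ z, Relation.ReflTransGen (ZigStep (θ ⁻¹' {θ x})) x z → θ z = θ x →
        (ξ z, θ z) = (ξ x, θ x) :=
      fun z hz hθ => Prod.ext (h x z ⟨rfl, hθ, hz⟩) hθ
    refine ⟨rfl, key y hr hy, ?_⟩
    clear hy
    induction hr with
    | refl => exact .refl
    | tail hab hbc ih =>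
      exact ih.tail ⟨key _ hab hbc.1, key _ (hab.tail hbc) hbc.2.1, hbc.2.2⟩

theorem eq_of_mem_Gmap {P R : Type} [PartialOrder P] {f : P → R} {x y : P}
    (h : y ∈ Gmap f x) : f y = f x := h.2.1

/-- For each `θ`, a `G`-preserving map `r` with injective first components sends some `(ξ, θ)`
with `ξ` constant on the sets `Gmap θ x` to a homomorphism whose first component is constantly
`q₀`: the first component of `r (·, θ)` is an injective, hence surjective, self-map of the finite
set of such `ξ`. -/
theorem exists_lift {P Q R S : Type} [PartialOrder P] [Finite P]
    [PartialOrder Q] [Finite Q] [PartialOrder R] [PartialOrder S]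
    (r : (P →o Q × R) → (P →o Q × S))
    (hG : ∀ ξ x, Gmap (r ξ) x = Gmap ξ x)
    (hfst : ∀ (ξ ζ : P →o Q) (θ : P →o R), ξ ≠ ζ →
        OrderHom.fst.comp (r (ξ.prod θ)) ≠ OrderHom.fst.comp (r (ζ.prod θ)))
    (q₀ : Q) (θ : P →o R) :
    ∃ ξ : P →o Q, ConstOnG ξ θ ∧
      OrderHom.fst.comp (r (ξ.prod θ)) = OrderHom.const P q₀ := by
  have : Finite (P →o Q) := DFunLike.finite _
  let F : {ξ : P →o Q // ConstOnG ξ θ} → {ξ : P →o Q // ConstOnG ξ θ} := fun ξ =>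
    ⟨OrderHom.fst.comp (r (ξ.1.prod θ)), fun x y hy => by
      have hy' : y ∈ Gmap (r (ξ.1.prod θ)) x := by
        rw [hG]
        exact (Gmap_prod_eq ξ.2 x).symm ▸ hy
      exact congrArg Prod.fst (eq_of_mem_Gmap hy')⟩
  have hF : Function.Injective F := by
    intro ξ ζ h
    by_contra hne
    exact hfst ξ.1 ζ.1 θ (fun e => hne (Subtype.ext e)) (congrArg Subtype.val h)
  obtain ⟨ξ, hξ⟩ := (Finite.injective_iff_surjective.mp hF)
    ⟨OrderHom.const P q₀, fun _ _ _ => rfl⟩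
  exact ⟨ξ.1, ξ.2, congrArg Subtype.val hξ⟩

/-- Cancellation for products and `⊑_G` under the extra hypothesis on first components:
let `ρ` be a strong G-scheme from `Q × R` to `Q × S` such that for all `ξ ≠ ζ` in
`H(P,Q)` and all `θ ∈ H(P,R)`, the first components of `ρ_P((ξ,θ))` and `ρ_P((ζ,θ))`
differ.  Then `R ⊑_G S`. -/
theorem stmt16 (Q R S : Type)
    [PartialOrder Q] [Finite Q] [Nonempty Q]
    [PartialOrder R] [Finite R] [Nonempty R]
    [PartialOrder S] [Finite S] [Nonempty S]
    (ρ : ∀ (P : Type) [PartialOrder P] [Finite P] [Nonempty P],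
      (P →o Q × R) → (P →o Q × S))
    (hstrong : ∀ (P : Type) [PartialOrder P] [Finite P] [Nonempty P],
      Function.Injective (ρ P))
    (hG : ∀ (P : Type) [PartialOrder P] [Finite P] [Nonempty P]
      (ξ : P →o Q × R) (x : P), Gmap (⇑(ρ P ξ)) x = Gmap (⇑ξ) x)
    (hfst : ∀ (P : Type) [PartialOrder P] [Finite P] [Nonempty P]
      (ξ ζ : P →o Q) (θ : P →o R), ξ ≠ ζ →
        OrderHom.fst.comp (ρ P (ξ.prod θ)) ≠ OrderHom.fst.comp (ρ P (ζ.prod θ))) :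
    SqsubG R S := by
  obtain ⟨q₀⟩ := ‹Nonempty Q›
  choose L hL hLq using fun (P : Type) [PartialOrder P] [Finite P] [Nonempty P] (θ : P →o R) =>
    exists_lift (ρ P) (hG P) (hfst P) q₀ θ
  refine ⟨fun P _ _ _ θ => OrderHom.snd.comp (ρ P ((L P θ).prod θ)), fun P _ _ _ => ⟨?_, ?_⟩⟩
  · intro θ θ' h
    have e : ρ P ((L P θ).prod θ) = ρ P ((L P θ').prod θ') := by
      ext1
      funext x
      exact Prod.ext (DFunLike.congr_fun ((hLq P θ).trans (hLq P θ').symm) x)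
        (DFunLike.congr_fun h x)
    ext1
    funext x
    exact congrArg Prod.snd (DFunLike.congr_fun (hstrong P e) x)
  · intro θ x
    -- The first component of `ρ P (L P θ, θ)` is constant, so it does not affect `Gmap`.
    have hc : ConstOnG (OrderHom.fst.comp (ρ P ((L P θ).prod θ)))
        (OrderHom.snd.comp (ρ P ((L P θ).prod θ))) := by
      rw [hLq]
      exact fun _ _ _ => rfl
    exact (Gmap_prod_eq hc x).symm.trans ((hG P _ x).trans (Gmap_prod_eq (hL P θ) x))
end

section
/- Let Q, R, S be finite nonempty posets, where Q has carrier Y, R has carrier X, and Q is disjoint from R and from S. Let ε : E(Q ⊕ R) → E(Q ⊕ S) be an injective strict homomorphism with respect to the relations ≤₊. Set E(R)* ≔ {(x, D ∪ Y, U) : (x,D,U) ∈ E(R)}, E(Q)* ≔ {(x, D, U ∪ X) : (x,D,U) ∈ E(Q)}, and E(S)* ≔ {(x, D ∪ Y, U) : (x,D,U) ∈ E(S)}. Then: (i) for every 𝔟 ∈ E(R)*, the first component of ε(𝔟) lies in S; and (ii) if Y ⊆ {ε(𝔞)₁ : 𝔞 ∈ E(Q)*}, then ε(E(R)*) ⊆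 E(S)*. -/
/-!
Every `𝔟 ∈ E(R)*` lies `<₊`-above every element of `E(Q ⊕ R)` whose first component is in `Q` and
whose third component contains all of `R`.

For (i), attach to each `x : Q` the full triple `(x, {z | z < x}, {z | x < z})`; this turns `<` into
`<₊`.  If `ε(𝔟)₁ = y` were in `Q`, then all `ε`-images of full triples of elements of `Q` would have
first component strictly below `y`, hence in `Q`, so taking first components would give a strictly
monotone `g : Q → Q` with `g y < y`.  This yields the infinite descent `y > g y > g (g y) > ⋯`,
impossible in a finite poset (`not_apply_lt_of_strictMono`).

For (ii), each `y : Q` is `ε(𝔞)₁` for some `𝔞 ∈ E(Q)*`, and `𝔞 <₊ 𝔟` gives `y ∈ ε(𝔟)₂`.  So `ε(𝔟)₂`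
contains `Q`, and as `ε(𝔟)₁ ∈ S` by (i), the remaining data of `ε(𝔟)` live in `S`.
-/

/-- The EV-system of a poset `P`: triples `(x, D, U)` with `D` a set of elements
strictly below `x` and `U` a set of elements strictly above `x`. -/
def EV (P : Type) [PartialOrder P] : Type :=
  {t : P × Set P × Set P // (∀ d ∈ t.2.1, d < t.1) ∧ (∀ u ∈ t.2.2, t.1 < u)}

/-- The relation `<₊` on the EV-system: `a <₊ b` iff `a₁ ∈ b₂` and `b₁ ∈ a₃`. -/
def LTplus {P : Type} [PartialOrder P] (a b : EV P) : Prop :=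
  a.1.1 ∈ b.1.2.1 ∧ b.1.1 ∈ a.1.2.2

/-- `E(B)* ⊆ E(A ⊕ B)`: the elements `(x, D ∪ Y, U)` for `(x, D, U) ∈ E(B)`,
where `Y` is the (whole) carrier of `A`.  The ordinal sum is modelled by `A ⊕ₗ B`. -/
def ERstar (A B : Type) [PartialOrder A] [PartialOrder B] : Set (EV (A ⊕ₗ B)) :=
  {t | ∃ s : EV B, t.1.1 = Sum.inrₗ s.1.1 ∧
    t.1.2.1 = (fun x : B => (Sum.inrₗ x : A ⊕ₗ B)) '' s.1.2.1
        ∪ Set.range (fun y : A => (Sum.inlₗ y : A ⊕ₗ B)) ∧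
    t.1.2.2 = (fun x : B => (Sum.inrₗ x : A ⊕ₗ B)) '' s.1.2.2}

/-- `E(A)* ⊆ E(A ⊕ B)`: the elements `(x, D, U ∪ X)` for `(x, D, U) ∈ E(A)`,
where `X` is the (whole) carrier of `B`. -/
def EQstar (A B : Type) [PartialOrder A] [PartialOrder B] : Set (EV (A ⊕ₗ B)) :=
  {t | ∃ s : EV A, t.1.1 = Sum.inlₗ s.1.1 ∧
    t.1.2.1 = (fun y : A => (Sum.inlₗ y : A ⊕ₗ B)) '' s.1.2.1 ∧
    t.1.2.2 = (fun y : A => (Sum.inlₗ y : A ⊕ₗ B)) '' s.1.2.2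
        ∪ Set.range (fun x : B => (Sum.inrₗ x : A ⊕ₗ B))}

/-- The triple `(x, D, U)` of `E(P)` with the largest possible `D` and `U`. -/
def fullEV {P : Type} [PartialOrder P] (x : P) : EV P :=
  ⟨(x, Set.Iio x, Set.Ioi x), fun _ h => h, fun _ h => h⟩

lemma fullEV_LTplus {P : Type} [PartialOrder P] {x y : P} (h : x < y) :
    LTplus (fullEV x) (fullEV y) := ⟨h, h⟩

lemma LTplus.fst_lt {P : Type} [PartialOrder P] {a b : EV P} (h : LTplus a b) :
    a.1.1 < b.1.1 := b.2.1 _ h.1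

lemma not_apply_lt_of_strictMono {P : Type} [PartialOrder P] [Finite P] {g : P → P}
    (hg : StrictMono g) (y : P) : ¬ g y < y := by
  induction y using WellFoundedLT.induction with
  | ind y ih => exact fun h => ih (g y) h (hg h)

/-- An element of an ordinal sum below an element of the lower summand is in the lower summand. -/
lemma exists_inl_of_lt {A B : Type} [PartialOrder A] [PartialOrder B] {z : A ⊕ₗ B} {y : A}
    (h : z < Sum.inlₗ y) : ∃ q : A, z = Sum.inlₗ q := by
  rcases z with q | r
  · exact ⟨q, rfl⟩
  · exact absurd h Sum.Lex.not_inr_lt_inl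

/-- An element of an ordinal sum above an element of the upper summand is in the upper summand. -/
lemma exists_inr_of_lt {A B : Type} [PartialOrder A] [PartialOrder B] {z : A ⊕ₗ B} {s : B}
    (h : Sum.inrₗ s < z) : ∃ r : B, z = Sum.inrₗ r := by
  rcases z with q | r
  · exact absurd h Sum.Lex.not_inr_lt_inl
  · exact ⟨r, rfl⟩

lemma LTplus_of_mem_ERstar {Q R : Type} [PartialOrder Q] [PartialOrder R] {a b : EV (Q ⊕ₗ R)}
    (hb : b ∈ ERstar Q R) {x : Q} (ha : a.1.1 = Sum.inlₗ x)
    (hU : ∀ r : R, Sum.inrₗ r ∈ a.1.2.2) : LTplus a b := by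
  obtain ⟨s, h1, h2, -⟩ := hb
  constructor
  · rw [h2, ha]
    exact Or.inr ⟨x, rfl⟩
  · rw [h1]
    exact hU _

/-- An element of `E(A ⊕ B)` based in `B` is in `E(B)*` as soon as its second component contains
all of `A`. -/
lemma mem_ERstar_of_inl_mem {A B : Type} [PartialOrder A] [PartialOrder B] {c : EV (A ⊕ₗ B)}
    {s : B} (hs : c.1.1 = Sum.inrₗ s) (hA : ∀ y : A, Sum.inlₗ y ∈ c.1.2.1) :
    c ∈ ERstar A B := by
  refine ⟨⟨(s, {x | Sum.inrₗ x ∈ c.1.2.1}, {x | Sum.inrₗ x ∈ c.1.2.2}), ?_, ?_⟩, hs, ?_, ?_⟩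
  · intro d hd
    have := c.2.1 _ hd
    rw [hs] at this
    exact Sum.Lex.inr_lt_inr_iff.1 this
  · intro u hu
    have := c.2.2 _ hu
    rw [hs] at this
    exact Sum.Lex.inr_lt_inr_iff.1 this
  · ext z
    constructor
    · intro hz
      rcases z with q | r
      · exact Or.inr ⟨q, rfl⟩
      · exact Or.inl ⟨r, hz, rfl⟩
    · rintro (⟨r, hr, rfl⟩ | ⟨q, rfl⟩)
      · exact hr
      · exact hA q
  · ext z
    constructor
    · intro hz
      have := c.2.2 _ hz
      rw [hs] at this
      obtain ⟨r, rfl⟩ := exists_inr_of_lt this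
      exact ⟨r, hz, rfl⟩
    · rintro ⟨r, hr, rfl⟩
      exact hr

/-- For an injective strict homomorphism `ε : E(Q ⊕ R) → E(Q ⊕ S)`:
(i) the first component of `ε(𝔟)` lies in `S` for every `𝔟 ∈ E(R)*`, and
(ii) if every carrier element of `Q` occurs as first component of some `ε(𝔞)` with
`𝔞 ∈ E(Q)*`, then `ε(E(R)*) ⊆ E(S)*`. -/
theorem stmt19 (Q R S : Type)
    [PartialOrder Q] [Finite Q] [Nonempty Q]
    [PartialOrder R] [Finite R] [Nonempty R]
    [PartialOrder S] [Finite S] [Nonempty S]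
    (ε : EV (Q ⊕ₗ R) → EV (Q ⊕ₗ S))
    (hinj : Function.Injective ε)
    (hstrict : ∀ a b : EV (Q ⊕ₗ R), LTplus a b → LTplus (ε a) (ε b) ∧ ε a ≠ ε b) :
    (∀ b ∈ ERstar Q R, ∃ s : S, (ε b).1.1 = Sum.inrₗ s) ∧
    ((∀ y : Q, ∃ a ∈ EQstar Q R, (ε a).1.1 = Sum.inlₗ y) →
      ε '' ERstar Q R ⊆ ERstar Q S) := by
  have key : ∀ b ∈ ERstar Q R, ∃ s : S, (ε b).1.1 = Sum.inrₗ s := by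
    intro b hb
    rcases hy : (ε b).1.1 with y | s
    · exfalso
      have hlt : ∀ x : Q, (ε (fullEV (Sum.inlₗ x : Q ⊕ₗ R))).1.1 < (Sum.inlₗ y : Q ⊕ₗ S) := by
        intro x
        have hx : LTplus (fullEV (Sum.inlₗ x : Q ⊕ₗ R)) b :=
          LTplus_of_mem_ERstar hb rfl fun r => Sum.Lex.inl_lt_inr x r
        have := (hstrict _ _ hx).1.fst_lt
        rw [hy] at this
        exact this
      choose g hg using fun x => exists_inl_of_lt (hlt x)
      have hmono : StrictMono g := by
        intro x x' h
        have hlift : (Sum.inlₗ x : Q ⊕ₗ R) < Sum.inlₗ x' := Sum.Lex.inl_lt_inl_iff.2 h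
        have := (hstrict _ _ (fullEV_LTplus hlift)).1.fst_lt
        rw [hg x, hg x'] at this
        exact Sum.Lex.inl_lt_inl_iff.1 this
      have hgy := hlt y
      rw [hg y] at hgy
      exact not_apply_lt_of_strictMono hmono y (Sum.Lex.inl_lt_inl_iff.1 hgy)
    · exact ⟨s, rfl⟩
  refine ⟨key, ?_⟩
  rintro hY _ ⟨b, hb, rfl⟩
  obtain ⟨s, hs⟩ := key b hb
  refine mem_ERstar_of_inl_mem hs fun y => ?_
  obtain ⟨a, ⟨t, ha, -, hU⟩, hay⟩ := hY y
  have hab : LTplus a b := LTplus_of_mem_ERstar hb ha fun r => by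
    rw [hU]
    exact Or.inr ⟨r, rfl⟩
  rw [← hay]
  exact (hstrict _ _ hab).1.1
end
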